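/- arXiv:1106.2264 — 5 statements merged into one kernel-verified Lean document; each statement's English description precedes it below -/
import Mathlib

section
/- If K ⊂ R^m is a convex body whose center of mass (barycenter) is at the origin, then vol((−K) ∩ K) ≥ 2^{−m}·vol(K). -/
open MeasureTheory
open scoped ENNReal

/-!
Let `U` be the interior of `K` and let `f = 1_U ⋆ 1_U`, so that `f 0 = vol (-U ∩ U)`. By the
Prékopa–Leindler inequality `f` is log-concave. It is the density of `ν ∗ ν`, where `ν` is the
restriction of the volume to `U`; hence its total mass is `(vol U) ^ 2`, its barycenter is `0`, and
its support is `U + U = 2U`.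

A log-concave `f` with barycenter `x₀` satisfies `∫ f ≤ f x₀ * vol (support f)`: if `l` is a
supergradient of `log f` at `x₀`, then `f x * (1 - l (x - x₀)) ≤ f x * exp (-l (x - x₀)) ≤ f x₀`,
and the linear term integrates to zero. For the convolution above this reads
`(vol U) ^ 2 ≤ vol (-U ∩ U) * 2 ^ m * vol U`.
-/

open Filter Function Set
open scoped Topology

section OneDimensionalBrunnMinkowski

open scoped Pointwise

variable {A B : Set ℝ}

theorem volume_add_volume_le_volume_add_of_isCompact (hA : IsCompact A) (hB : IsCompact B)
    (hA₀ : A.Nonempty) (hB₀ : B.Nonempty) : volume A + volume B ≤ volume (A + B) := by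
  -- The translates of `A` by `min B` and of `B` by `max A` lie in `A + B` and share only one point.
  have hdisj : AEDisjoint volume (A + {sInf B}) ({sSup A} + B) := by
    refine measure_mono_null (t := {sSup A + sInf B}) ?_ (measure_singleton _)
    rintro _ ⟨⟨x, hx, _, rfl, rfl⟩, ⟨_, rfl, y, hy, hxy⟩⟩
    have hxA : x ≤ sSup A := le_csSup hA.bddAbove hx
    have hyB : sInf B ≤ y := csInf_le hB.bddBelow hy
    simp only [mem_singleton_iff] at hxy ⊢
    linarith
  have hmeas : NullMeasurableSet ({sSup A} + B) :=
    (isCompact_singleton.add hB).measurableSet.nullMeasurableSet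
  calc volume A + volume B = volume (A + {sInf B}) + volume ({sSup A} + B) := by
        simp [measure_preimage_add, measure_preimage_add_right]
    _ = volume ((A + {sInf B}) ∪ ({sSup A} + B)) := (measure_union₀ hmeas hdisj).symm
    _ ≤ volume (A + B) := by
        gcongr
        exact union_subset
          (add_subset_add_left (singleton_subset_iff.2 (hB.sInf_mem hB₀)))
          (add_subset_add_right (singleton_subset_iff.2 (hA.sSup_mem hA₀)))

theorem volume_add_volume_le_volume_add (hA : MeasurableSet A) (hB : MeasurableSet B)
    (hA₀ : A.Nonempty) (hB₀ : B.Nonempty) : volume A + volume B ≤ volume (A + B) := by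
  obtain ⟨x, hx⟩ := hA₀
  obtain ⟨y, hy⟩ := hB₀
  simp only [hA.measure_eq_iSup_isCompact, hB.measure_eq_iSup_isCompact, iSup_and']
  refine ENNReal.biSup_add_biSup_le' ⟨∅, by simp⟩ ⟨∅, by simp⟩ ?_
  rintro C ⟨hCA, hC⟩ D ⟨hDB, hD⟩
  calc volume C + volume D ≤ volume (insert x C) + volume (insert y D) := by
        gcongr <;> exact subset_insert _ _
    _ ≤ volume (insert x C + insert y D) :=
        volume_add_volume_le_volume_add_of_isCompact (hC.insert x) (hD.insert y)
          (insert_nonempty x C) (insert_nonempty y D)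
    _ ≤ volume (A + B) :=
        measure_mono (add_subset_add (insert_subset hx hCA) (insert_subset hy hDB))

theorem ofReal_mul_volume_add_ofReal_mul_volume_le {a b : ℝ} (ha : 0 < a) (hb : 0 < b)
    (hA : MeasurableSet A) (hB : MeasurableSet B) (hA₀ : A.Nonempty) (hB₀ : B.Nonempty) :
    ENNReal.ofReal a * volume A + ENNReal.ofReal b * volume B ≤ volume (a • A + b • B) := by
  simpa [Measure.addHaar_smul, abs_of_pos, ha, hb] using
    volume_add_volume_le_volume_add (hA.const_smul_of_ne_zero ha.ne')
      (hB.const_smul_of_ne_zero hb.ne') hA₀.smul_set hB₀.smul_set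

end OneDimensionalBrunnMinkowski

section LayerCake

variable {α : Type*} [MeasurableSpace α] {μ : Measure α} {f : α → ℝ≥0∞}

theorem lintegral_eq_lintegral_meas_ofReal_lt (hf : Measurable f) (hf_top : ∀ x, f x ≠ ∞) :
    ∫⁻ x, f x ∂μ = ∫⁻ t in Ioi (0 : ℝ), μ {x | ENNReal.ofReal t < f x} := by
  have hlayer := lintegral_eq_lintegral_meas_lt μ (f := fun x ↦ (f x).toReal)
    (.of_forall fun x ↦ ENNReal.toReal_nonneg) hf.ennreal_toReal.aemeasurable
  simp only [ENNReal.ofReal_toReal (hf_top _)] at hlayer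
  rw [hlayer]
  refine setLIntegral_congr_fun measurableSet_Ioi fun t ht ↦ ?_
  simp only [ENNReal.ofReal_lt_iff_lt_toReal (le_of_lt ht) (hf_top _)]

theorem measurable_meas_ofReal_lt (μ : Measure α) (f : α → ℝ≥0∞) :
    Measurable fun t : ℝ ↦ μ {x | ENNReal.ofReal t < f x} :=
  Antitone.measurable fun _ _ hst ↦
    measure_mono fun _ hx ↦ (ENNReal.ofReal_le_ofReal hst).trans_lt hx

theorem tendsto_lintegral_min_natCast (hf : Measurable f) :
    Tendsto (fun n : ℕ ↦ ∫⁻ x, min (f x) n ∂μ) atTop (𝓝 (∫⁻ x, f x ∂μ)) := by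
  refine lintegral_tendsto_of_tendsto_of_monotone (fun n ↦ (hf.min measurable_const).aemeasurable)
    (.of_forall fun x m n hmn ↦ min_le_min_left _ (by exact_mod_cast hmn)) (.of_forall fun x ↦ ?_)
  simpa using (tendsto_const_nhds (x := f x)).min ENNReal.tendsto_nat_nhds_top

end LayerCake

section OneDimensionalPrekopaLeindler

variable {a b : ℝ} {f g h : ℝ → ℝ≥0∞}

theorem rpow_mul_rpow_le_ofReal_mul_add_ofReal_mul (ha : 0 < a) (hb : 0 < b) (hab : a + b = 1)
    (x y : ℝ≥0∞) : x ^ a * y ^ b ≤ ENNReal.ofReal a * x + ENNReal.ofReal b * y := by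
  induction x with
  | top => simp [ENNReal.mul_top, ha]
  | coe x =>
    induction y with
    | top => simp [ENNReal.mul_top, hb]
    | coe y =>
      lift a to NNReal using ha.le
      lift b to NNReal using hb.le
      rw [← ENNReal.coe_rpow_of_nonneg _ ha.le, ← ENNReal.coe_rpow_of_nonneg _ hb.le,
        ENNReal.ofReal_coe_nnreal, ENNReal.ofReal_coe_nnreal]
      exact_mod_cast NNReal.geom_mean_le_arith_mean2_weighted a b x y (by exact_mod_cast hab)

theorem lt_rpow_mul_rpow (ha : 0 < a) (hb : 0 < b) (hab : a + b = 1) {t x y : ℝ≥0∞}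
    (hx : t < x) (hy : t < y) : t < x ^ a * y ^ b :=
  calc t = t ^ a * t ^ b := by
        rw [← ENNReal.rpow_add_of_nonneg _ _ ha.le hb.le, hab, ENNReal.rpow_one]
    _ < x ^ a * y ^ b :=
        ENNReal.mul_lt_mul (ENNReal.rpow_lt_rpow hx ha) (ENNReal.rpow_lt_rpow hy hb)

theorem ofReal_mul_meas_lt_add_ofReal_mul_meas_lt_le (ha : 0 < a) (hb : 0 < b) (hab : a + b = 1)
    (hf : Measurable f) (hg : Measurable g) {t : ℝ≥0∞} (hft : t < ⨆ x, f x) (hgt : t < ⨆ x, g x)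
    (hfgh : ∀ x y, f x ^ a * g y ^ b ≤ h (a • x + b • y)) :
    ENNReal.ofReal a * volume {x | t < f x} + ENNReal.ofReal b * volume {x | t < g x} ≤
      volume {x | t < h x} := by
  refine (ofReal_mul_volume_add_ofReal_mul_volume_le ha hb (measurableSet_lt measurable_const hf)
    (measurableSet_lt measurable_const hg) (lt_iSup_iff.1 hft) (lt_iSup_iff.1 hgt)).trans
    (measure_mono ?_)
  rintro _ ⟨_, ⟨x, hx, rfl⟩, _, ⟨y, hy, rfl⟩, rfl⟩
  exact (lt_rpow_mul_rpow ha hb hab hx hy).trans_le (hfgh x y)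

theorem ofReal_mul_lintegral_add_le_of_iSup_eq_one (ha : 0 < a) (hb : 0 < b) (hab : a + b = 1)
    (hf : Measurable f) (hg : Measurable g) (hh : Measurable h)
    (hf_sup : ⨆ x, f x = 1) (hg_sup : ⨆ x, g x = 1)
    (hfgh : ∀ x y, f x ^ a * g y ^ b ≤ h (a • x + b • y)) :
    ENNReal.ofReal a * (∫⁻ x, f x) + ENNReal.ofReal b * (∫⁻ x, g x) ≤ ∫⁻ x, h x := by
  have hf_le (x : ℝ) : f x ≤ 1 := hf_sup ▸ le_iSup f x
  have hg_le (x : ℝ) : g x ≤ 1 := hg_sup ▸ le_iSup g x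
  have hfgh_min (x y : ℝ) : f x ^ a * g y ^ b ≤ min (h (a • x + b • y)) 1 :=
    le_min (hfgh x y) (mul_le_one' (ENNReal.rpow_le_one (hf_le x) ha.le)
      (ENNReal.rpow_le_one (hg_le y) hb.le))
  have ne_top_of_le_one {u : ℝ → ℝ≥0∞} (hu : ∀ x, u x ≤ 1) (x : ℝ) : u x ≠ ∞ :=
    ne_top_of_le_ne_top ENNReal.one_ne_top (hu x)
  refine le_trans ?_ (lintegral_mono fun x ↦ min_le_left (h x) 1)
  rw [lintegral_eq_lintegral_meas_ofReal_lt hf (ne_top_of_le_one hf_le),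
    lintegral_eq_lintegral_meas_ofReal_lt hg (ne_top_of_le_one hg_le),
    lintegral_eq_lintegral_meas_ofReal_lt (hh.min measurable_const)
      (ne_top_of_le_one fun x ↦ min_le_right _ _),
    ← lintegral_const_mul _ (measurable_meas_ofReal_lt _ f),
    ← lintegral_const_mul _ (measurable_meas_ofReal_lt _ g),
    ← lintegral_add_left ((measurable_meas_ofReal_lt _ f).const_mul _)]
  refine lintegral_mono fun t ↦ ?_
  rcases lt_or_ge (ENNReal.ofReal t) 1 with ht | ht
  · exact ofReal_mul_meas_lt_add_ofReal_mul_meas_lt_le ha hb hab hf hg (hf_sup ▸ ht) (hg_sup ▸ ht)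
      hfgh_min
  · simp [fun x ↦ ((hf_le x).trans ht).not_gt, fun x ↦ ((hg_le x).trans ht).not_gt]

theorem lintegral_rpow_mul_lintegral_rpow_le_of_iSup_ne_top
    (ha : 0 < a) (hb : 0 < b) (hab : a + b = 1)
    (hf : Measurable f) (hg : Measurable g) (hh : Measurable h)
    (hf_sup : ⨆ x, f x ≠ ∞) (hg_sup : ⨆ x, g x ≠ ∞)
    (hfgh : ∀ x y, f x ^ a * g y ^ b ≤ h (a • x + b • y)) :
    (∫⁻ x, f x) ^ a * (∫⁻ x, g x) ^ b ≤ ∫⁻ x, h x := by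
  rcases eq_or_ne (⨆ x, f x) 0 with hf_zero | hf_zero
  · simp [ENNReal.iSup_eq_zero.1 hf_zero, ha]
  rcases eq_or_ne (⨆ x, g x) 0 with hg_zero | hg_zero
  · simp [ENNReal.iSup_eq_zero.1 hg_zero, hb]
  set S := (⨆ x, f x)⁻¹ with hS
  set T := (⨆ x, g x)⁻¹ with hT
  have scale (u v : ℝ≥0∞) : S ^ a * T ^ b * (u ^ a * v ^ b) = (S * u) ^ a * (T * v) ^ b := by
    rw [ENNReal.mul_rpow_of_nonneg _ _ ha.le, ENNReal.mul_rpow_of_nonneg _ _ hb.le,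
      mul_mul_mul_comm]
  have hST_zero : S ^ a * T ^ b ≠ 0 := by
    simp [hS, hT, ENNReal.rpow_eq_zero_iff, hf_sup, hg_sup, ha.not_gt, hb.not_gt]
  have hST_top : S ^ a * T ^ b ≠ ∞ :=
    ENNReal.mul_ne_top (ENNReal.rpow_ne_top_of_nonneg ha.le (ENNReal.inv_ne_top.2 hf_zero))
      (ENNReal.rpow_ne_top_of_nonneg hb.le (ENNReal.inv_ne_top.2 hg_zero))
  refine (ENNReal.mul_le_mul_iff_right hST_zero hST_top).1 ?_
  calc S ^ a * T ^ b * ((∫⁻ x, f x) ^ a * (∫⁻ x, g x) ^ b)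
      = (∫⁻ x, S * f x) ^ a * (∫⁻ x, T * g x) ^ b := by
        rw [scale, lintegral_const_mul _ hf, lintegral_const_mul _ hg]
    _ ≤ ENNReal.ofReal a * (∫⁻ x, S * f x) + ENNReal.ofReal b * (∫⁻ x, T * g x) :=
        rpow_mul_rpow_le_ofReal_mul_add_ofReal_mul ha hb hab _ _
    _ ≤ ∫⁻ x, S ^ a * T ^ b * h x := by
        refine ofReal_mul_lintegral_add_le_of_iSup_eq_one ha hb hab (hf.const_mul _)
          (hg.const_mul _) (hh.const_mul _) ?_ ?_ fun x y ↦ ?_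
        · rw [← ENNReal.mul_iSup, ENNReal.inv_mul_cancel hf_zero hf_sup]
        · rw [← ENNReal.mul_iSup, ENNReal.inv_mul_cancel hg_zero hg_sup]
        · rw [← scale]
          gcongr
          exact hfgh x y
    _ = S ^ a * T ^ b * ∫⁻ x, h x := lintegral_const_mul _ hh

end OneDimensionalPrekopaLeindler

section PrekopaLeindler

variable {E F : Type*} [AddCommGroup E] [Module ℝ E] [MeasurableSpace E]
  [AddCommGroup F] [Module ℝ F] [MeasurableSpace F]

/-- The measure `μ` satisfies the Prékopa–Leindler inequality for every pair of positive weights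
`a + b = 1`. Isolating the inequality as a property of the measure lets it be transported along
products and linear maps. -/
def IsPrekopaLeindler (μ : Measure E) : Prop :=
  ∀ ⦃a b : ℝ⦄, 0 < a → 0 < b → a + b = 1 → ∀ ⦃f g h : E → ℝ≥0∞⦄,
    Measurable f → Measurable g → Measurable h →
    (∀ x y, f x ^ a * g y ^ b ≤ h (a • x + b • y)) →
    (∫⁻ x, f x ∂μ) ^ a * (∫⁻ x, g x ∂μ) ^ b ≤ ∫⁻ x, h x ∂μ

theorem isPrekopaLeindler_volume_real : IsPrekopaLeindler (volume : Measure ℝ) := by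
  intro a b ha hb hab f g h hf hg hh hfgh
  rcases eq_or_ne (∫⁻ x, f x) 0 with hf_zero | hf_zero
  · simp [hf_zero, ha]
  rcases eq_or_ne (∫⁻ x, g x) 0 with hg_zero | hg_zero
  · simp [hg_zero, hb]
  have hlim : Tendsto (fun n : ℕ ↦ (∫⁻ x, min (f x) n) ^ a * (∫⁻ x, min (g x) n) ^ b) atTop
      (𝓝 ((∫⁻ x, f x) ^ a * (∫⁻ x, g x) ^ b)) :=
    ENNReal.Tendsto.mul ((tendsto_lintegral_min_natCast hf).ennrpow_const a)
      (.inl (by simp [ENNReal.rpow_eq_zero_iff, hf_zero, ha.not_gt]))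
      ((tendsto_lintegral_min_natCast hg).ennrpow_const b)
      (.inl (by simp [ENNReal.rpow_eq_zero_iff, hg_zero, hb.not_gt]))
  have iSup_min_ne_top (u : ℝ → ℝ≥0∞) (n : ℕ) : ⨆ x, min (u x) n ≠ ∞ :=
    ne_top_of_le_ne_top (ENNReal.natCast_ne_top n) (iSup_le fun x ↦ min_le_right _ _)
  refine le_of_tendsto' hlim fun n ↦ lintegral_rpow_mul_lintegral_rpow_le_of_iSup_ne_top ha hb hab
    (hf.min measurable_const) (hg.min measurable_const) hh (iSup_min_ne_top f n)
    (iSup_min_ne_top g n) fun x y ↦ le_trans ?_ (hfgh x y)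
  gcongr <;> exact min_le_left _ _

theorem isPrekopaLeindler_dirac (x : E) : IsPrekopaLeindler (Measure.dirac x) := by
  intro a b _ _ hab f g h hf hg hh hfgh
  simpa [lintegral_dirac' x hf, lintegral_dirac' x hg, lintegral_dirac' x hh, ← add_smul, hab]
    using hfgh x x

namespace IsPrekopaLeindler

variable {μ : Measure E} {ν : Measure F}

theorem prod [SFinite ν] (hμ : IsPrekopaLeindler μ) (hν : IsPrekopaLeindler ν) :
    IsPrekopaLeindler (μ.prod ν) := by
  intro a b ha hb hab f g h hf hg hh hfgh
  rw [lintegral_prod _ hf.aemeasurable, lintegral_prod _ hg.aemeasurable,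
    lintegral_prod _ hh.aemeasurable]
  refine hμ ha hb hab hf.lintegral_prod_right' hg.lintegral_prod_right' hh.lintegral_prod_right'
    fun x₁ x₂ ↦ ?_
  exact hν ha hb hab (hf.comp measurable_prodMk_left) (hg.comp measurable_prodMk_left)
    (hh.comp measurable_prodMk_left) fun y₁ y₂ ↦ hfgh (x₁, y₁) (x₂, y₂)

theorem map (hμ : IsPrekopaLeindler μ) (L : E →ₗ[ℝ] F) (hL : Measurable L) :
    IsPrekopaLeindler (μ.map L) := by
  intro a b ha hb hab f g h hf hg hh hfgh
  rw [lintegral_map hf hL, lintegral_map hg hL, lintegral_map hh hL]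
  exact hμ ha hb hab (hf.comp hL) (hg.comp hL) (hh.comp hL) fun x y ↦ by
    simpa using hfgh (L x) (L y)

theorem smul (hμ : IsPrekopaLeindler μ) (c : ℝ≥0∞) : IsPrekopaLeindler (c • μ) := by
  intro a b ha hb hab f g h hf hg hh hfgh
  simp only [lintegral_smul_measure, smul_eq_mul]
  calc (c * ∫⁻ x, f x ∂μ) ^ a * (c * ∫⁻ x, g x ∂μ) ^ b
      = c ^ (a + b) * ((∫⁻ x, f x ∂μ) ^ a * (∫⁻ x, g x ∂μ) ^ b) := by
        rw [ENNReal.mul_rpow_of_nonneg _ _ ha.le, ENNReal.mul_rpow_of_nonneg _ _ hb.le,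
          ENNReal.rpow_add_of_nonneg _ _ ha.le hb.le, mul_mul_mul_comm]
    _ ≤ c * ∫⁻ x, h x ∂μ := by
        rw [hab, ENNReal.rpow_one]
        gcongr
        exact hμ ha hb hab hf hg hh hfgh

end IsPrekopaLeindler

theorem isPrekopaLeindler_volume_pi (n : ℕ) :
    IsPrekopaLeindler (volume : Measure (Fin n → ℝ)) := by
  induction n with
  | zero =>
    rw [volume_pi, Measure.pi_of_empty]
    exact isPrekopaLeindler_dirac _
  | succ n ih =>
    let cons := (Fin.consLinearEquiv ℝ fun _ : Fin (n + 1) ↦ ℝ).toLinearMap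
    have hcons : MeasurePreserving cons (volume.prod volume) volume := by
      convert! (volume_preserving_piFinSuccAbove (fun _ : Fin (n + 1) ↦ ℝ) 0).symm
      ext p i
      simp [cons, MeasurableEquiv.piFinSuccAbove, Fin.insertNthEquiv]
    rw [← hcons.map_eq]
    exact (isPrekopaLeindler_volume_real.prod ih).map cons hcons.measurable

end PrekopaLeindler

theorem isPrekopaLeindler_of_isAddHaarMeasure {E : Type*} [NormedAddCommGroup E] [NormedSpace ℝ E]
    [FiniteDimensional ℝ E] [MeasurableSpace E] [BorelSpace E] (μ : Measure E)
    [μ.IsAddHaarMeasure] : IsPrekopaLeindler μ := by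
  let e : (Fin (Module.finrank ℝ E) → ℝ) ≃L[ℝ] E := .ofFinrankEq (by simp)
  rw [Measure.isAddLeftInvariant_eq_smul μ (volume.map e)]
  exact ((isPrekopaLeindler_volume_pi _).map e.toLinearMap e.continuous.measurable).smul _

/-- Log-concavity of an extended-nonnegative function, in the multiplicative form that allows the
values `0` and `∞`. -/
def LogConcave {E : Type*} [AddCommGroup E] [Module ℝ E] (f : E → ℝ≥0∞) : Prop :=
  ∀ ⦃a b : ℝ⦄, 0 < a → 0 < b → a + b = 1 → ∀ x y, f x ^ a * f y ^ b ≤ f (a • x + b • y)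

theorem logConcave_indicator_one_of_convex {E : Type*} [AddCommGroup E] [Module ℝ E] {s : Set E}
    (hs : Convex ℝ s) : LogConcave (s.indicator 1) := by
  intro a b ha hb hab x y
  by_cases hx : x ∈ s
  · by_cases hy : y ∈ s
    · simp [hx, hy, hs hx hy ha.le hb.le hab]
    · simp [hy, hb]
  · simp [hx, ha]

namespace LogConcave

variable {E : Type*} [AddCommGroup E] [Module ℝ E] {f g : E → ℝ≥0∞}

theorem lconvolution [MeasurableSpace E] [MeasurableAdd₂ E] [MeasurableNeg E] {μ : Measure E}
    (hμ : IsPrekopaLeindler μ) (hf : LogConcave f) (hg : LogConcave g) (hf_meas : Measurable f)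
    (hg_meas : Measurable g) : LogConcave (f ⋆ₗ[μ] g) := by
  intro a b ha hb hab x y
  refine hμ ha hb hab (by fun_prop) (by fun_prop) (by fun_prop) fun u v ↦ ?_
  calc (f u * g (-u + x)) ^ a * (f v * g (-v + y)) ^ b
      = (f u ^ a * f v ^ b) * (g (-u + x) ^ a * g (-v + y) ^ b) := by
        rw [ENNReal.mul_rpow_of_nonneg _ _ ha.le, ENNReal.mul_rpow_of_nonneg _ _ hb.le,
          mul_mul_mul_comm]
    _ ≤ f (a • u + b • v) * g (a • (-u + x) + b • (-v + y)) :=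
        mul_le_mul' (hf ha hb hab u v) (hg ha hb hab _ _)
    _ = f (a • u + b • v) * g (-(a • u + b • v) + (a • x + b • y)) := by
        congr 2
        module

theorem convex_support (hf : LogConcave f) : Convex ℝ (support f) := by
  rw [convex_iff_forall_pos]
  intro x hx y hy a b ha hb hab
  have hpos : 0 < f x ^ a * f y ^ b := by
    simp [pos_iff_ne_zero, ENNReal.rpow_eq_zero_iff, mem_support.1 hx, mem_support.1 hy, ha.not_gt,
      hb.not_gt]
  exact (hpos.trans_le (hf ha hb hab x y)).ne'

theorem concaveOn_log_toReal (hf : LogConcave f) (hf_top : ∀ x, f x ≠ ∞) :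
    ConcaveOn ℝ (support f) fun x ↦ Real.log (f x).toReal := by
  refine concaveOn_iff_forall_pos.2 ⟨hf.convex_support, fun x hx y hy a b ha hb hab ↦ ?_⟩
  have hfx : 0 < (f x).toReal := ENNReal.toReal_pos hx (hf_top x)
  have hfy : 0 < (f y).toReal := ENNReal.toReal_pos hy (hf_top y)
  calc a • Real.log (f x).toReal + b • Real.log (f y).toReal
      = Real.log ((f x).toReal ^ a * (f y).toReal ^ b) := by
        rw [Real.log_mul (by positivity) (by positivity), Real.log_rpow hfx, Real.log_rpow hfy,
          smul_eq_mul, smul_eq_mul]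
    _ ≤ Real.log (f (a • x + b • y)).toReal := by
        refine Real.log_le_log (by positivity) ?_
        simpa [ENNReal.toReal_rpow] using ENNReal.toReal_mono (hf_top _) (hf ha hb hab x y)

end LogConcave

section Separation

variable {E : Type*}

theorem exists_le_add_apply_sub_of_concaveOn [AddCommGroup E] [Module ℝ E] [TopologicalSpace E]
    [IsTopologicalAddGroup E] [ContinuousSMul ℝ E] {s : Set E} {φ : E → ℝ} (hφ : ConcaveOn ℝ s φ)
    (hs : IsOpen s) (hφ_cont : ContinuousOn φ s) {x₀ : E} (hx₀ : x₀ ∈ s) :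
    ∃ l : E →L[ℝ] ℝ, ∀ x ∈ s, φ x ≤ φ x₀ + l (x - x₀) := by
  have hopen : IsOpen {p : E × ℝ | p.1 ∈ s ∧ p.2 < φ p.1} := by
    have hcont : ContinuousOn (fun p : E × ℝ ↦ φ p.1 - p.2) (Prod.fst ⁻¹' s) :=
      (hφ_cont.comp continuousOn_fst fun _ hp ↦ hp).sub continuousOn_snd
    convert! hcont.isOpen_inter_preimage (hs.preimage continuous_fst) (isOpen_Ioi (a := 0))
      using 1
    ext p
    simp
  obtain ⟨L, hL⟩ := geometric_hahn_banach_open_point hφ.convex_strict_hypograph hopen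
    (x := (x₀, φ x₀)) fun h ↦ lt_irrefl _ h.2
  have hL_split (x : E) (r : ℝ) : L (x, r) = L (x, 0) + r * L (0, 1) := by
    rw [← smul_eq_mul, ← map_smul, ← map_add]
    simp
  have hslope : 0 < L (0, 1) := by
    have hbelow := hL (x₀, φ x₀ - 1) ⟨hx₀, sub_one_lt _⟩
    rw [hL_split x₀ (φ x₀ - 1), hL_split x₀ (φ x₀)] at hbelow
    linarith
  refine ⟨-(L (0, 1))⁻¹ • L.comp (.inl ℝ E ℝ), fun x hx ↦ le_of_forall_lt fun r hr ↦ ?_⟩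
  have hlt := hL (x, r) ⟨hx, hr⟩
  rw [hL_split x r, hL_split x₀ (φ x₀)] at hlt
  have hdiff : L (x - x₀, 0) = L (x, 0) - L (x₀, 0) := by
    rw [← map_sub]
    simp
  simp only [_root_.smul_apply, ContinuousLinearMap.comp_apply, ContinuousLinearMap.inl_apply,
    hdiff, smul_eq_mul]
  field_simp
  linarith

theorem average_id_mem_of_isOpen_of_convex [NormedAddCommGroup E] [NormedSpace ℝ E]
    [CompleteSpace E] [MeasurableSpace E] {s : Set E} (hs : IsOpen s) (hs_conv : Convex ℝ s)
    {ρ : Measure E} [IsFiniteMeasure ρ] (hρ : ρ ≠ 0) (hρ_mem : ∀ᵐ x ∂ρ, x ∈ s)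
    (hρ_int : Integrable (fun x ↦ x) ρ) : ⨍ x, x ∂ρ ∈ s := by
  by_contra hmem
  obtain ⟨l, hl⟩ := geometric_hahn_banach_open_point hs_conv hs hmem
  obtain ⟨x, hx, hle⟩ :=
    exists_notMem_null_average_le hρ (l.integrable_comp hρ_int) (mem_ae_iff.1 hρ_mem)
  refine (hl x (not_not.1 hx)).not_ge (le_trans (le_of_eq ?_) hle)
  rw [average_eq, average_eq, map_smul, l.integral_comp_comm hρ_int]

end Separation

section FirstMoment

variable {E : Type*} [NormedAddCommGroup E] [MeasurableSpace E]

theorem integrable_apply_sub_average [NormedSpace ℝ E] {ρ : Measure E} [IsFiniteMeasure ρ]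
    (hρ : Integrable (fun x ↦ x) ρ) (l : E →L[ℝ] ℝ) :
    Integrable (fun x ↦ l (x - ⨍ y, y ∂ρ)) ρ :=
  l.integrable_comp (hρ.sub (integrable_const _))

theorem integral_apply_sub_average [NormedSpace ℝ E] [CompleteSpace E] {ρ : Measure E}
    [IsFiniteMeasure ρ] (hρ : Integrable (fun x ↦ x) ρ) (l : E →L[ℝ] ℝ) :
    ∫ x, l (x - ⨍ y, y ∂ρ) ∂ρ = 0 := by
  rw [l.integral_comp_comm (φ := fun x ↦ x - ⨍ y, y ∂ρ) (hρ.sub (integrable_const _)),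
    integral_sub_average, map_zero]

variable [BorelSpace E] [SecondCountableTopology E] {μ ν : Measure E} [IsFiniteMeasure μ]
  [IsFiniteMeasure ν]

theorem integrable_id_conv (hμ : Integrable (fun x ↦ x) μ) (hν : Integrable (fun x ↦ x) ν) :
    Integrable (fun x ↦ x) (μ ∗ ν) :=
  (integrable_map_measure aestronglyMeasurable_id (by fun_prop)).2
    ((hμ.comp_fst ν).add (hν.comp_snd μ))

theorem integral_id_conv [NormedSpace ℝ E] [CompleteSpace E]
    (hμ : Integrable (fun x ↦ x) μ) (hν : Integrable (fun x ↦ x) ν) :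
    ∫ x, x ∂(μ ∗ ν) = ν.real univ • ∫ x, x ∂μ + μ.real univ • ∫ x, x ∂ν := by
  rw [integral_conv (integrable_id_conv hμ hν)]
  simp only [integral_add (integrable_const _) hν, integral_const]
  rw [integral_add (hμ.fun_smul _) (integrable_const _), integral_smul, integral_const]

end FirstMoment

namespace LogConcave

variable {E : Type*} [NormedAddCommGroup E] [NormedSpace ℝ E] {f : E → ℝ≥0∞}

theorem average_withDensity_mem_support [CompleteSpace E] [MeasurableSpace E] {μ : Measure E}
    (hf : LogConcave f) (hf_meas : Measurable f) (hf_supp : IsOpen (support f))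
    (hf_zero : ∫⁻ x, f x ∂μ ≠ 0) (hf_int : ∫⁻ x, f x ∂μ ≠ ∞)
    (hf_moment : Integrable (fun x ↦ x) (μ.withDensity f)) :
    ⨍ x, x ∂μ.withDensity f ∈ support f := by
  have := isFiniteMeasure_withDensity hf_int
  refine average_id_mem_of_isOpen_of_convex hf_supp hf.convex_support ?_ ?_ hf_moment
  · rwa [← Measure.measure_univ_ne_zero, withDensity_apply _ .univ, setLIntegral_univ]
  · exact (ae_withDensity_iff hf_meas).2 (.of_forall fun _ hx ↦ hx)

variable [FiniteDimensional ℝ E]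

theorem exists_toReal_mul_one_sub_le (hf : LogConcave f) (hf_top : ∀ x, f x ≠ ∞)
    (hf_supp : IsOpen (support f)) {x₀ : E} (hx₀ : x₀ ∈ support f) :
    ∃ l : E →L[ℝ] ℝ, ∀ x ∈ support f, (f x).toReal * (1 - l (x - x₀)) ≤ (f x₀).toReal := by
  have hconc := hf.concaveOn_log_toReal hf_top
  obtain ⟨l, hl⟩ :=
    exists_le_add_apply_sub_of_concaveOn hconc hf_supp (hconc.continuousOn hf_supp) hx₀
  refine ⟨l, fun x hx ↦ ?_⟩
  have hfx : 0 < (f x).toReal := ENNReal.toReal_pos hx (hf_top x)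
  have hfx₀ : 0 < (f x₀).toReal := ENNReal.toReal_pos hx₀ (hf_top x₀)
  calc (f x).toReal * (1 - l (x - x₀))
      ≤ Real.exp (Real.log (f x).toReal) * Real.exp (-l (x - x₀)) := by
        rw [Real.exp_log hfx]
        gcongr
        exact Real.one_sub_le_exp_neg _
    _ = Real.exp (Real.log (f x).toReal - l (x - x₀)) := by
        rw [← Real.exp_add, ← sub_eq_add_neg]
    _ ≤ Real.exp (Real.log (f x₀).toReal) := by
        gcongr
        linarith [hl x hx]
    _ = (f x₀).toReal := Real.exp_log hfx₀

theorem lintegral_le_apply_average_mul_measure_support [MeasurableSpace E] [BorelSpace E]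
    {μ : Measure E} (hf : LogConcave f) (hf_meas : Measurable f) (hf_top : ∀ x, f x ≠ ∞)
    (hf_supp : IsOpen (support f)) (hf_int : ∫⁻ x, f x ∂μ ≠ ∞)
    (hf_moment : Integrable (fun x ↦ x) (μ.withDensity f)) :
    ∫⁻ x, f x ∂μ ≤ f (⨍ x, x ∂μ.withDensity f) * μ (support f) := by
  rcases eq_or_ne (∫⁻ x, f x ∂μ) 0 with hf_zero | hf_zero
  · simp [hf_zero]
  have := isFiniteMeasure_withDensity hf_int
  have hx₀ : ⨍ x, x ∂μ.withDensity f ∈ support f :=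
    hf.average_withDensity_mem_support hf_meas hf_supp hf_zero hf_int hf_moment
  set x₀ := ⨍ x, x ∂μ.withDensity f
  rcases eq_or_ne (μ (support f)) ∞ with hsupp_top | hsupp_top
  · simp [hsupp_top, ENNReal.mul_top (mem_support.1 hx₀)]
  have hf_lt_top : ∀ᵐ x ∂μ, f x < ∞ := .of_forall fun x ↦ (hf_top x).lt_top
  obtain ⟨l, hl⟩ := hf.exists_toReal_mul_one_sub_le hf_top hf_supp hx₀
  have htilt_int : Integrable (fun x ↦ (f x).toReal • (1 - l (x - x₀))) μ :=
    (integrable_withDensity_iff_integrable_smul' hf_meas hf_lt_top).1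
      ((integrable_const 1).sub (integrable_apply_sub_average hf_moment l))
  rw [← ENNReal.toReal_le_toReal hf_int (ENNReal.mul_ne_top (hf_top _) hsupp_top)]
  calc (∫⁻ x, f x ∂μ).toReal
      = ∫ x, 1 - l (x - x₀) ∂μ.withDensity f := by
        rw [integral_sub (integrable_const 1) (integrable_apply_sub_average hf_moment l),
          integral_apply_sub_average hf_moment l]
        simp [Measure.real]
    _ = ∫ x, (f x).toReal • (1 - l (x - x₀)) ∂μ :=
        integral_withDensity_eq_integral_toReal_smul hf_meas hf_lt_top _
    _ = ∫ x in support f, (f x).toReal • (1 - l (x - x₀)) ∂μ :=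
        (setIntegral_eq_integral_of_forall_compl_eq_zero fun x hx ↦ by
          simp [notMem_support.1 hx]).symm
    _ ≤ ∫ _ in support f, (f x₀).toReal ∂μ :=
        setIntegral_mono_on htilt_int.integrableOn (integrableOn_const hsupp_top)
          hf_supp.measurableSet hl
    _ = (f x₀ * μ (support f)).toReal := by simp [Measure.real, mul_comm]

end LogConcave

theorem conv_apply_univ {M : Type*} [AddMonoid M] [MeasurableSpace M] [MeasurableAdd₂ M]
    (ρ σ : Measure M) [SFinite σ] : (ρ ∗ σ) univ = ρ univ * σ univ := by
  rw [Measure.conv, Measure.map_apply measurable_add .univ, preimage_univ, ← univ_prod_univ,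
    Measure.prod_prod]

section IndicatorConvolution

open scoped Pointwise

variable {G : Type*} [AddGroup G] [MeasurableSpace G] [MeasurableAdd₂ G] {s t : Set G}

theorem lconvolution_indicator_one_apply [MeasurableNeg G] (μ : Measure G)
    (hs : MeasurableSet s) (ht : MeasurableSet t) (x : G) :
    (s.indicator 1 ⋆ₗ[μ] t.indicator 1) x = μ (s ∩ (fun y ↦ -y + x) ⁻¹' t) := by
  have hmeas : MeasurableSet ((fun y ↦ -y + x) ⁻¹' t) := ht.preimage (by fun_prop)
  rw [← lintegral_indicator_one (hs.inter hmeas), lconvolution_def, inter_indicator_one]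
  rfl

theorem withDensity_lconvolution_indicator_one [MeasurableNeg G] (μ : Measure G) [SFinite μ]
    [μ.IsAddLeftInvariant] (hs : MeasurableSet s) (ht : MeasurableSet t) :
    μ.withDensity (s.indicator 1 ⋆ₗ[μ] t.indicator 1) = μ.restrict s ∗ μ.restrict t := by
  rw [← conv_withDensity_eq_lconvolution (measurable_one.indicator hs)
    (measurable_one.indicator ht), withDensity_indicator_one hs, withDensity_indicator_one ht]

theorem lintegral_lconvolution_indicator_one [MeasurableNeg G] (μ : Measure G) [SFinite μ]
    [μ.IsAddLeftInvariant] (hs : MeasurableSet s) (ht : MeasurableSet t) :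
    ∫⁻ x, (s.indicator 1 ⋆ₗ[μ] t.indicator 1) x ∂μ = μ s * μ t := by
  rw [← setLIntegral_univ, ← withDensity_apply _ .univ,
    withDensity_lconvolution_indicator_one μ hs ht, conv_apply_univ, Measure.restrict_apply_univ,
    Measure.restrict_apply_univ]

theorem support_lconvolution_indicator_one [TopologicalSpace G] [IsTopologicalAddGroup G]
    [BorelSpace G] (μ : Measure G) [μ.IsOpenPosMeasure] (hs : IsOpen s) (ht : IsOpen t) :
    support (s.indicator 1 ⋆ₗ[μ] t.indicator 1) = s + t := by
  ext x
  have hopen : IsOpen (s ∩ (fun y ↦ -y + x) ⁻¹' t) := hs.inter (ht.preimage (by fun_prop))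
  rw [mem_support, lconvolution_indicator_one_apply μ hs.measurableSet ht.measurableSet, ne_eq,
    IsOpen.measure_eq_zero_iff μ hopen, ← ne_eq, ← nonempty_iff_ne_empty, Set.mem_add]
  exact exists_congr fun y ↦ and_congr_right fun _ ↦
    ⟨fun hy ↦ ⟨_, hy, add_neg_cancel_left y x⟩, fun ⟨z, hz, hyz⟩ ↦ by simpa [← hyz] using hz⟩

end IndicatorConvolution

section Symmetrization

open scoped Pointwise

variable {E : Type*} [NormedAddCommGroup E] [NormedSpace ℝ E] [FiniteDimensional ℝ E]
  [MeasurableSpace E] [BorelSpace E] (μ : Measure E) [μ.IsAddHaarMeasure] {K U : Set E}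

theorem measure_add_self_of_convex (hK : Convex ℝ K) :
    μ (K + K) = 2 ^ Module.finrank ℝ E * μ K := by
  have hdouble : K + K = (2 : ℝ) • K := by
    rw [← one_add_one_eq_two, hK.add_smul zero_le_one zero_le_one, one_smul]
  rw [hdouble, Measure.addHaar_smul]
  simp [ENNReal.ofReal_pow]

theorem measure_mul_self_le_measure_neg_inter_mul_measure_add (hU : IsOpen U) (hU_conv : Convex ℝ U)
    (hU_top : μ U ≠ ∞) (hU_moment : IntegrableOn (fun x ↦ x) U μ)
    (hU_bary : ∫ x in U, x ∂μ = 0) :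
    μ U * μ U ≤ μ (-U ∩ U) * μ (U + U) := by
  have : IsFiniteMeasure (μ.restrict U) := isFiniteMeasure_restrict.2 hU_top
  have hind_meas : Measurable (U.indicator (1 : E → ℝ≥0∞)) :=
    measurable_one.indicator hU.measurableSet
  have hind_conc : LogConcave (U.indicator 1) := logConcave_indicator_one_of_convex hU_conv
  set f : E → ℝ≥0∞ := U.indicator 1 ⋆ₗ[μ] U.indicator 1
  have hf_conc : LogConcave f := hind_conc.lconvolution (isPrekopaLeindler_of_isAddHaarMeasure μ)
    hind_conc hind_meas hind_meas
  have hf_apply (x : E) : f x = μ (U ∩ (fun y ↦ -y + x) ⁻¹' U) :=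
    lconvolution_indicator_one_apply μ hU.measurableSet hU.measurableSet x
  have hf_density : μ.withDensity f = μ.restrict U ∗ μ.restrict U :=
    withDensity_lconvolution_indicator_one μ hU.measurableSet hU.measurableSet
  have hf_mass : ∫⁻ x, f x ∂μ = μ U * μ U :=
    lintegral_lconvolution_indicator_one μ hU.measurableSet hU.measurableSet
  have hf_supp : support f = U + U := support_lconvolution_indicator_one μ hU hU
  have hf_bary : ⨍ x, x ∂μ.withDensity f = 0 := by
    rw [average_eq, hf_density, integral_id_conv hU_moment hU_moment, hU_bary, smul_zero, add_zero,
      smul_zero]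
  have hf_zero : f 0 = μ (-U ∩ U) := by simp [hf_apply, inter_comm, ← neg_preimage]
  rw [← hf_mass, ← hf_zero, ← hf_supp, ← hf_bary]
  exact hf_conc.lintegral_le_apply_average_mul_measure_support
    (measurable_lconvolution μ hind_meas hind_meas)
    (fun x ↦ hf_apply x ▸ measure_ne_top_of_subset inter_subset_left hU_top)
    (hf_supp ▸ hU.add_right) (hf_mass ▸ ENNReal.mul_ne_top hU_top hU_top)
    (hf_density ▸ integrable_id_conv hU_moment hU_moment)

theorem volume_symmetrization_general (hconv : Convex ℝ K) (hbdd : Bornology.IsBounded K)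
    (hbary : ∫ x in K, x ∂μ = 0) :
    (2 : ℝ≥0∞)⁻¹ ^ Module.finrank ℝ E * μ K ≤ μ (-K ∩ K) := by
  have hK_ae : interior K =ᵐ[μ] K := interior_ae_eq_of_null_frontier (hconv.addHaar_frontier μ)
  have hK_moment : IntegrableOn (fun x ↦ x) (interior K) μ :=
    (continuousOn_id.integrableOn_compact hbdd.isCompact_closure).mono_set
      (interior_subset.trans subset_closure)
  have hineq : μ K * μ K ≤ μ (-interior K ∩ interior K) * (2 ^ Module.finrank ℝ E * μ K) := by
    simpa only [measure_add_self_of_convex μ hconv.interior, measure_congr hK_ae] using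
      measure_mul_self_le_measure_neg_inter_mul_measure_add μ isOpen_interior hconv.interior
        (measure_ne_top_of_subset interior_subset hbdd.measure_lt_top.ne) hK_moment
        (by rwa [setIntegral_congr_set hK_ae])
  rcases eq_or_ne (μ K) 0 with hK_zero | hK_zero
  · simp [hK_zero]
  calc (2 : ℝ≥0∞)⁻¹ ^ Module.finrank ℝ E * μ K ≤ μ (-interior K ∩ interior K) := by
        rw [← mul_assoc, ENNReal.mul_le_mul_iff_left hK_zero hbdd.measure_lt_top.ne] at hineq
        rw [← ENNReal.inv_pow, mul_comm, ← div_eq_mul_inv]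
        exact ENNReal.div_le_of_le_mul hineq
    _ ≤ μ (-K ∩ K) :=
        measure_mono (inter_subset_inter (neg_subset_neg.2 interior_subset) interior_subset)

end Symmetrization

/-- **Symmetrization mildly affects volume** (Rogers–Shephard-type inequality;
Aubrun–Szarek–Ye, Proposition 4 / Milman–Pajor).  If `K ⊂ ℝ^m` is a convex body whose
center of mass is at the origin, then `vol((−K) ∩ K) ≥ 2^{−m} vol(K)`. -/
theorem volume_symmetrization (m : ℕ) (K : Set (Fin m → ℝ))
    (hconv : Convex ℝ K) (hcomp : IsCompact K) (hint : (interior K).Nonempty)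
    (hbary : ∫ x in K, x ∂volume = 0) :
    ((2 : ℝ≥0∞))⁻¹ ^ m * volume K ≤ volume ((-K) ∩ K) := by
  simpa using volume_symmetrization_general volume hconv hcomp.isBounded hbary
end

section
/- Let Z be a bounded real random variable with law μ_Z whose support equals a bounded interval [a,b] with a < b, and let (Y_n) be a sequence of bounded real random variables. Then the following are equivalent: (1) d_∞(Y_n, Z) → 0; (2) Y_n converges to Z in distribution (weakly), ess sup Y_n → b, and ess inf Y_n → a. -/
open MeasureTheory Filter Topology
open scoped ENNReal BigOperators

noncomputable section

/-- The `∞`-Wasserstein distance between two (probability) measures on `ℝ`: the infimum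
over all couplings `π` (measures on `ℝ × ℝ` with the prescribed marginals) of the
essential supremum of `|x − y|`; this coincides with `inf ‖X₁ − X₂‖_{L^∞}` over all
pairs of random variables with the given laws defined on a common probability space. -/
def wassersteinInf (μ₁ μ₂ : Measure ℝ) : ℝ≥0∞ :=
  ⨅ (π : Measure (ℝ × ℝ)) (_ : π.map Prod.fst = μ₁ ∧ π.map Prod.snd = μ₂),
    essSup (fun p : ℝ × ℝ => ENNReal.ofReal |p.1 - p.2|) π

/-- The (topological) support of a measure on `ℝ`: the set of points all of whose
neighborhoods have positive measure. -/
def measureSupport (μ : Measure ℝ) : Set ℝ := {x | ∀ U ∈ nhds x, μ U ≠ 0}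

end

/-!
Write `W` for `wassersteinInf`. If `W μ ν < ε`, a near-optimal coupling gives
`μ B ≤ ν (thickening ε B)` for every measurable `B`. Hence `W` dominates the Lévy–Prokhorov
distance, which metrizes weak convergence, and the essential supremum and infimum are `1`-Lipschitz
for `W`.

Conversely, the quantile coupling shows `W μ ν ≤ ε` as soon as `μ (-∞, t] ≤ ν (-∞, t + ε]` and
`ν (-∞, t] ≤ μ (-∞, t + ε]` for all `t`. Lévy–Prokhorov closeness gives these inequalities up to an
additive error `δ`. By compactness, all balls of a fixed radius centred in the support `[a, b]` of
`μZ` have mass at least some `m > 0`, so enlarging the shift absorbs the error once `δ ≤ m`. Where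
no such ball is available, the bounds on the essential supremum and infimum force the left-hand
side to be `0` or the right-hand side to be `1`.
-/

section

open Set Metric ProbabilityTheory

/-! ### The quantile coupling -/

/-- The quantile function (generalized inverse of the distribution function) of a measure on `ℝ`,
used to couple any two laws on the probability space `(0, 1)`. It is meaningful only for
`u ∈ (0, 1)`; elsewhere the set may be empty or unbounded below and `sInf` returns a junk value. -/
noncomputable def quantile (μ : Measure ℝ) (u : ℝ) : ℝ := sInf {t | u ≤ cdf μ t}

lemma quantile_le_iff (μ : Measure ℝ) {u : ℝ} (hu : u ∈ Ioo 0 1) {t : ℝ} :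
    quantile μ u ≤ t ↔ u ≤ cdf μ t := by
  have bddBelow : BddBelow {t | u ≤ cdf μ t} := by
    obtain ⟨s, hs⟩ := ((tendsto_cdf_atBot μ).eventually_lt_const hu.1).exists
    exact ⟨s, fun t ht => ((monotone_cdf μ).reflect_lt (hs.trans_le ht)).le⟩
  have nonempty : {t | u ≤ cdf μ t}.Nonempty := by
    obtain ⟨s, hs⟩ := ((tendsto_cdf_atTop μ).eventually_const_lt hu.2).exists
    exact ⟨s, hs.le⟩
  have infimum_attained : u ≤ cdf μ (quantile μ u) := by
    have right_cont : Tendsto (cdf μ) (𝓝[>] quantile μ u) (𝓝 (cdf μ (quantile μ u))) :=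
      ((cdf μ).right_continuous _).mono_left (nhdsWithin_mono _ Ioi_subset_Ici_self)
    refine ge_of_tendsto right_cont ?_
    filter_upwards [self_mem_nhdsWithin] with s hs
    obtain ⟨r, hr, hrs⟩ := exists_lt_of_csInf_lt nonempty hs
    exact le_trans hr (monotone_cdf μ hrs.le)
  exact ⟨fun h => infimum_attained.trans (monotone_cdf μ h), fun h => csInf_le bddBelow h⟩

lemma le_cdf_quantile (μ : Measure ℝ) {u : ℝ} (hu : u ∈ Ioo 0 1) : u ≤ cdf μ (quantile μ u) :=
  (quantile_le_iff μ hu).1 le_rfl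

lemma monotoneOn_quantile (μ : Measure ℝ) : MonotoneOn (quantile μ) (Ioo 0 1) :=
  fun _ hu _ hv huv => (quantile_le_iff μ hu).2 (huv.trans (le_cdf_quantile μ hv))

lemma aemeasurable_quantile (μ : Measure ℝ) :
    AEMeasurable (quantile μ) (volume.restrict (Ioo 0 1)) :=
  aemeasurable_restrict_of_monotoneOn measurableSet_Ioo (monotoneOn_quantile μ)

lemma volume_restrict_Ioo_zero_one_Iic {c : ℝ} (hc : c ≤ 1) :
    volume.restrict (Ioo (0 : ℝ) 1) (Iic c) = ENNReal.ofReal c := by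
  rw [restrict_Ioo_eq_restrict_Ioc, Measure.restrict_apply measurableSet_Iic, inter_comm,
    Ioc_inter_Iic, min_eq_right hc, Real.volume_Ioc, sub_zero]

lemma map_quantile (μ : Measure ℝ) [IsProbabilityMeasure μ] :
    (volume.restrict (Ioo 0 1)).map (quantile μ) = μ := by
  refine (Measure.ext_of_Iic _ _ fun t => ?_).symm
  have preimage_ae : quantile μ ⁻¹' Iic t =ᵐ[volume.restrict (Ioo 0 1)] Iic (cdf μ t) := by
    filter_upwards [ae_restrict_mem measurableSet_Ioo] with u hu
    exact propext (quantile_le_iff μ hu)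
  rw [Measure.map_apply_of_aemeasurable (aemeasurable_quantile μ) measurableSet_Iic,
    measure_congr preimage_ae, volume_restrict_Ioo_zero_one_Iic (cdf_le_one μ t), ofReal_cdf]

lemma quantile_le_quantile_add {μ ν : Measure ℝ} {ε : ℝ} (h : ∀ t, cdf ν t ≤ cdf μ (t + ε))
    {u : ℝ} (hu : u ∈ Ioo 0 1) : quantile μ u ≤ quantile ν u + ε :=
  (quantile_le_iff μ hu).2 ((le_cdf_quantile ν hu).trans (h _))

lemma wassersteinInf_map_le {Ω : Type*} [MeasurableSpace Ω] {P : Measure Ω} {X Y : Ω → ℝ}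
    (hX : AEMeasurable X P) (hY : AEMeasurable Y P) {ε : ℝ} (h : ∀ᵐ ω ∂P, |X ω - Y ω| ≤ ε) :
    wassersteinInf (P.map X) (P.map Y) ≤ ENNReal.ofReal ε := by
  have hXY : AEMeasurable (fun ω => (X ω, Y ω)) P := hX.prodMk hY
  refine iInf₂_le_of_le (P.map fun ω => (X ω, Y ω)) ⟨?_, ?_⟩ (essSup_le_of_ae_le _ ?_)
  · exact AEMeasurable.map_map_of_aemeasurable (by fun_prop) hXY
  · exact AEMeasurable.map_map_of_aemeasurable (by fun_prop) hXY
  · rw [EventuallyLE, ae_map_iff hXY (measurableSet_le (by fun_prop) (by fun_prop))]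
    exact h.mono fun ω hω => ENNReal.ofReal_le_ofReal hω

lemma cdf_le_cdf_iff {μ ν : Measure ℝ} [IsProbabilityMeasure μ] [IsProbabilityMeasure ν]
    {s t : ℝ} : cdf μ s ≤ cdf ν t ↔ μ (Iic s) ≤ ν (Iic t) := by
  rw [← ofReal_cdf, ← ofReal_cdf, ENNReal.ofReal_le_ofReal_iff (cdf_nonneg ν t)]

lemma wassersteinInf_le_of_measure_Iic_le {μ ν : Measure ℝ} [IsProbabilityMeasure μ]
    [IsProbabilityMeasure ν] {ε : ℝ} (hμν : ∀ t, μ (Iic t) ≤ ν (Iic (t + ε)))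
    (hνμ : ∀ t, ν (Iic t) ≤ μ (Iic (t + ε))) : wassersteinInf μ ν ≤ ENNReal.ofReal ε := by
  have quantile_close : ∀ᵐ u ∂volume.restrict (Ioo (0 : ℝ) 1),
      |quantile μ u - quantile ν u| ≤ ε := by
    filter_upwards [ae_restrict_mem measurableSet_Ioo] with u hu
    exact abs_sub_le_iff.2
      ⟨sub_le_iff_le_add'.2 (quantile_le_quantile_add (fun t => cdf_le_cdf_iff.2 (hνμ t)) hu),
        sub_le_iff_le_add'.2 (quantile_le_quantile_add (fun t => cdf_le_cdf_iff.2 (hμν t)) hu)⟩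
  simpa only [map_quantile] using
    wassersteinInf_map_le (aemeasurable_quantile μ) (aemeasurable_quantile ν) quantile_close

/-! ### Quantities dominated by the `∞`-Wasserstein distance -/

lemma wassersteinInf_comm (μ ν : Measure ℝ) : wassersteinInf μ ν = wassersteinInf ν μ := by
  suffices swap_le : ∀ μ ν, wassersteinInf μ ν ≤ wassersteinInf ν μ from
    le_antisymm (swap_le μ ν) (swap_le ν μ)
  intro μ ν
  refine le_iInf₂ fun π hπ => iInf₂_le_of_le (π.map Prod.swap) ⟨?_, ?_⟩ (le_of_eq ?_)
  · rw [Measure.map_map measurable_fst measurable_swap]; exact hπ.2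
  · rw [Measure.map_map measurable_snd measurable_swap]; exact hπ.1
  · rw [essSup_map_measure_of_measurable (by fun_prop) measurable_swap.aemeasurable]
    simp only [Function.comp_def, Prod.fst_swap, Prod.snd_swap, abs_sub_comm]

lemma measure_le_measure_thickening_of_wassersteinInf_lt {μ ν : Measure ℝ} {ε : ℝ}
    (h : wassersteinInf μ ν < ENNReal.ofReal ε) {B : Set ℝ} (hB : MeasurableSet B) :
    μ B ≤ ν (thickening ε B) := by
  simp only [wassersteinInf, iInf_lt_iff] at h
  obtain ⟨π, ⟨rfl, rfl⟩, hπ⟩ := h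
  rw [Measure.map_apply measurable_fst hB,
    Measure.map_apply measurable_snd isOpen_thickening.measurableSet]
  refine measure_mono_ae ?_
  filter_upwards [ae_lt_of_essSup_lt hπ] with p hp hpB
  rw [ENNReal.ofReal_lt_ofReal_iff_of_nonneg (abs_nonneg _), abs_sub_comm] at hp
  exact mem_thickening_iff.2 ⟨p.1, hpB, hp⟩

lemma levyProkhorovEDist_le_wassersteinInf (μ ν : Measure ℝ) :
    levyProkhorovEDist μ ν ≤ wassersteinInf μ ν := by
  refine levyProkhorovEDist_le_of_forall μ ν _ fun ε B hε hε_top hB => ?_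
  rw [← ENNReal.ofReal_toReal hε_top.ne] at hε
  have hε' := hε
  rw [wassersteinInf_comm] at hε'
  exact ⟨le_add_right (measure_le_measure_thickening_of_wassersteinInf_lt hε hB),
    le_add_right (measure_le_measure_thickening_of_wassersteinInf_lt hε' hB)⟩

lemma ae_mem_thickening_of_wassersteinInf_lt {μ ν : Measure ℝ} {ε : ℝ}
    (h : wassersteinInf μ ν < ENNReal.ofReal ε) {S : Set ℝ} (hS : ∀ᵐ y ∂ν, y ∈ S) :
    ∀ᵐ x ∂μ, x ∈ thickening ε S := by
  have thickening_compl_subset : thickening ε (thickening ε S)ᶜ ⊆ Sᶜ := by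
    intro y hy hyS
    obtain ⟨x, hx, hyx⟩ := mem_thickening_iff.1 hy
    exact hx (mem_thickening_iff.2 ⟨y, hyS, dist_comm x y ▸ hyx⟩)
  refine measure_mono_null (t := (thickening ε S)ᶜ) Subset.rfl (le_zero_iff.1 ?_)
  calc μ (thickening ε S)ᶜ
      ≤ ν (thickening ε (thickening ε S)ᶜ) :=
        measure_le_measure_thickening_of_wassersteinInf_lt h isOpen_thickening.measurableSet.compl
    _ ≤ ν Sᶜ := measure_mono thickening_compl_subset
    _ = 0 := hS

lemma thickening_Iic_subset (ε c : ℝ) : thickening ε (Iic c) ⊆ Iic (c + ε) := by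
  intro x hx
  obtain ⟨z, hz, hxz⟩ := mem_thickening_iff.1 hx
  rw [Real.dist_eq, abs_lt] at hxz
  exact mem_Iic.2 (by linarith [mem_Iic.1 hz])

lemma thickening_Ici_subset (ε c : ℝ) : thickening ε (Ici c) ⊆ Ici (c - ε) := by
  intro x hx
  obtain ⟨z, hz, hxz⟩ := mem_thickening_iff.1 hx
  rw [Real.dist_eq, abs_lt] at hxz
  exact mem_Ici.2 (by linarith [mem_Ici.1 hz])

lemma isCoboundedUnder_le_ae_id (μ : Measure ℝ) [NeZero μ] :
    IsCoboundedUnder (· ≤ ·) (ae μ) (id : ℝ → ℝ) := by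
  have iUnion_Ici : ⋃ n : ℕ, Ici (-n : ℝ) = univ := iUnion_eq_univ_iff.2 fun x =>
    (exists_nat_ge (-x)).imp fun _ hn => neg_le.1 hn
  obtain ⟨n, hn⟩ := exists_measure_pos_of_not_measure_iUnion_null
    (iUnion_Ici ▸ Measure.measure_univ_ne_zero.2 (NeZero.ne μ))
  exact .of_frequently_ge (frequently_ae_iff.2 hn.ne')

lemma isCoboundedUnder_ge_ae_id (μ : Measure ℝ) [NeZero μ] :
    IsCoboundedUnder (· ≥ ·) (ae μ) (id : ℝ → ℝ) := by
  have iUnion_Iic : ⋃ n : ℕ, Iic (n : ℝ) = univ := iUnion_eq_univ_iff.2 exists_nat_ge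
  obtain ⟨n, hn⟩ := exists_measure_pos_of_not_measure_iUnion_null
    (iUnion_Iic ▸ Measure.measure_univ_ne_zero.2 (NeZero.ne μ))
  exact .of_frequently_le (frequently_ae_iff.2 hn.ne')

lemma essSup_le_essSup_add_of_wassersteinInf_lt {μ ν : Measure ℝ} [NeZero μ]
    (hν : IsBoundedUnder (· ≤ ·) (ae ν) (id : ℝ → ℝ)) {ε : ℝ}
    (h : wassersteinInf μ ν < ENNReal.ofReal ε) :
    essSup (id : ℝ → ℝ) μ ≤ essSup (id : ℝ → ℝ) ν + ε :=
  essSup_le_of_ae_le _ ((ae_mem_thickening_of_wassersteinInf_lt h (ae_le_essSup hν)).mono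
    fun _ hx => thickening_Iic_subset _ _ hx) (isCoboundedUnder_le_ae_id μ)

lemma essInf_sub_le_essInf_of_wassersteinInf_lt {μ ν : Measure ℝ} [NeZero μ]
    (hν : IsBoundedUnder (· ≥ ·) (ae ν) (id : ℝ → ℝ)) {ε : ℝ}
    (h : wassersteinInf μ ν < ENNReal.ofReal ε) :
    essInf (id : ℝ → ℝ) ν - ε ≤ essInf (id : ℝ → ℝ) μ :=
  le_essInf_of_ae_le _ ((ae_mem_thickening_of_wassersteinInf_lt h (ae_essInf_le hν)).mono
    fun _ hx => thickening_Ici_subset _ _ hx) (isCoboundedUnder_ge_ae_id μ)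

lemma edist_le_of_forall_lt_ofReal {x y : ℝ} {w : ℝ≥0∞}
    (h : ∀ ε : ℝ, w < ENNReal.ofReal ε → |x - y| ≤ ε) : edist x y ≤ w := by
  refine le_of_forall_gt_imp_ge_of_dense fun c hc => ?_
  rcases eq_or_ne c ⊤ with rfl | hc_top
  · exact le_top
  · rw [edist_dist, Real.dist_eq]
    exact ENNReal.ofReal_le_of_le_toReal (h _ (by rwa [ENNReal.ofReal_toReal hc_top]))

lemma edist_essSup_le_wassersteinInf {μ ν : Measure ℝ} [NeZero μ] [NeZero ν]
    (hμ : IsBoundedUnder (· ≤ ·) (ae μ) (id : ℝ → ℝ))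
    (hν : IsBoundedUnder (· ≤ ·) (ae ν) (id : ℝ → ℝ)) :
    edist (essSup (id : ℝ → ℝ) μ) (essSup (id : ℝ → ℝ) ν) ≤ wassersteinInf μ ν := by
  refine edist_le_of_forall_lt_ofReal fun ε hε => abs_sub_le_iff.2 ⟨?_, ?_⟩
  · linarith [essSup_le_essSup_add_of_wassersteinInf_lt hν hε]
  · linarith [essSup_le_essSup_add_of_wassersteinInf_lt hμ (wassersteinInf_comm μ ν ▸ hε)]

lemma edist_essInf_le_wassersteinInf {μ ν : Measure ℝ} [NeZero μ] [NeZero ν]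
    (hμ : IsBoundedUnder (· ≥ ·) (ae μ) (id : ℝ → ℝ))
    (hν : IsBoundedUnder (· ≥ ·) (ae ν) (id : ℝ → ℝ)) :
    edist (essInf (id : ℝ → ℝ) μ) (essInf (id : ℝ → ℝ) ν) ≤ wassersteinInf μ ν := by
  refine edist_le_of_forall_lt_ofReal fun ε hε => abs_sub_le_iff.2 ⟨?_, ?_⟩
  · linarith [essInf_sub_le_essInf_of_wassersteinInf_lt hμ (wassersteinInf_comm μ ν ▸ hε)]
  · linarith [essInf_sub_le_essInf_of_wassersteinInf_lt hν hε]

/-! ### Supports -/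

lemma measureSupport_eq_support (μ : Measure ℝ) : measureSupport μ = μ.support := by
  ext x
  simp only [measureSupport, mem_ofPred_eq, Measure.mem_support_iff_forall, pos_iff_ne_zero]

lemma essSup_id_eq_of_isGreatest_support {μ : Measure ℝ} {b : ℝ} (hb : IsGreatest μ.support b) :
    essSup (id : ℝ → ℝ) μ = b := by
  have : NeZero μ := ⟨Measure.nonempty_support_iff.1 ⟨b, hb.1⟩⟩
  have ae_le : ∀ᵐ x ∂μ, x ≤ b := mem_of_superset Measure.support_mem_ae hb.2
  refine le_antisymm (essSup_le_of_ae_le _ ae_le (isCoboundedUnder_le_ae_id μ)) ?_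
  have essSup_upper : μ (Ioi (essSup (id : ℝ → ℝ) μ)) = 0 :=
    meas_essSup_lt (isBoundedUnder_of_eventually_le ae_le)
  exact not_lt.1 fun hlt =>
    ((Measure.mem_support_iff_forall b).1 hb.1 _ (Ioi_mem_nhds hlt)).ne' essSup_upper

lemma essInf_id_eq_of_isLeast_support {μ : Measure ℝ} {a : ℝ} (ha : IsLeast μ.support a) :
    essInf (id : ℝ → ℝ) μ = a := by
  have : NeZero μ := ⟨Measure.nonempty_support_iff.1 ⟨a, ha.1⟩⟩
  have ae_ge : ∀ᵐ x ∂μ, a ≤ x := mem_of_superset Measure.support_mem_ae ha.2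
  refine le_antisymm ?_ (le_essInf_of_ae_le _ ae_ge (isCoboundedUnder_ge_ae_id μ))
  have essInf_lower : μ (Iio (essInf (id : ℝ → ℝ) μ)) = 0 :=
    meas_lt_essInf (isBoundedUnder_of_eventually_ge ae_ge)
  exact not_lt.1 fun hlt =>
    ((Measure.mem_support_iff_forall a).1 ha.1 _ (Iio_mem_nhds hlt)).ne' essInf_lower

lemma exists_pos_forall_le_measure_ball {X : Type*} [PseudoMetricSpace X] [MeasurableSpace X]
    {μ : Measure X} {K : Set X} (hK : IsCompact K) (hKμ : K ⊆ μ.support) {r : ℝ} (hr : 0 < r) :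
    ∃ m > 0, ∀ x ∈ K, m ≤ μ (ball x r) := by
  refine hK.induction_on (p := fun S => ∃ m > 0, ∀ x ∈ S, m ≤ μ (ball x r)) ?_ ?_ ?_ ?_
  · exact ⟨1, one_pos, by simp⟩
  · rintro S T hST ⟨m, hm, hT⟩
    exact ⟨m, hm, fun x hx => hT x (hST hx)⟩
  · rintro S T ⟨m, hm, hS⟩ ⟨m', hm', hT⟩
    exact ⟨min m m', lt_min hm hm', fun x hx => hx.elim
      (fun hxS => (min_le_left _ _).trans (hS x hxS))
      (fun hxT => (min_le_right _ _).trans (hT x hxT))⟩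
  · intro x hx
    have half_ball_nhds : ball x (r / 2) ∈ 𝓝 x := ball_mem_nhds x (half_pos hr)
    refine ⟨_, mem_nhdsWithin_of_mem_nhds half_ball_nhds, μ (ball x (r / 2)),
      (Measure.mem_support_iff_forall x).1 (hKμ hx) _ half_ball_nhds, fun y hy => ?_⟩
    refine measure_mono (ball_subset_ball' ?_)
    linarith [mem_ball'.1 hy]

/-! ### From Lévy–Prokhorov closeness to a coupling -/

lemma measure_Iic_le_of_levyProkhorovEDist_lt {μ ν : Measure ℝ} {δ : ℝ≥0∞}
    (h : levyProkhorovEDist μ ν < δ) (t : ℝ) : μ (Iic t) ≤ ν (Iic (t + δ.toReal)) + δ :=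
  (left_measure_le_of_levyProkhorovEDist_lt h measurableSet_Iic).trans
    (add_le_add_left (measure_mono (thickening_Iic_subset _ t)) _)

lemma measure_Iic_add_measure_ball_le (μ : Measure ℝ) {s r x y : ℝ} (hr : 0 ≤ r)
    (hx : x ≤ s - r) (hy : s + r ≤ y) : μ (Iic x) + μ (ball s r) ≤ μ (Iic y) := by
  have ball_subset : ball s r ⊆ Ioc x y := by
    rw [Real.ball_eq_Ioo]
    exact Ioo_subset_Ioc_self.trans (Ioc_subset_Ioc hx hy)
  calc μ (Iic x) + μ (ball s r)
      ≤ μ (Iic x) + μ (Ioc x y) := by gcongr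
    _ = μ (Iic y) := by
      rw [← measure_union (Iic_disjoint_Ioc le_rfl) measurableSet_Ioc,
        Iic_union_Ioc_eq_Iic (by linarith)]

lemma measure_Iic_eq_zero_of_ae_le {μ : Measure ℝ} {c t : ℝ} (h : ∀ᵐ x ∂μ, c ≤ x) (ht : t < c) :
    μ (Iic t) = 0 :=
  measure_eq_zero_iff_ae_notMem.2 (h.mono fun _ hx hxt => (ht.trans_le hx).not_ge hxt)

lemma measure_Iic_eq_one_of_ae_le {μ : Measure ℝ} [IsProbabilityMeasure μ] {c t : ℝ}
    (h : ∀ᵐ x ∂μ, x ≤ c) (ht : c ≤ t) : μ (Iic t) = 1 :=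
  (mem_ae_iff_prob_eq_one measurableSet_Iic).1 (h.mono fun _ hx => hx.trans ht)

section

variable {μ ν : Measure ℝ} [IsProbabilityMeasure μ] [IsProbabilityMeasure ν] {a b r : ℝ} {δ : ℝ≥0∞}

lemma measure_Iic_le_of_forall_le_measure_ball_right (hμ : ∀ᵐ x ∂μ, x ≤ b)
    (hν : ∀ᵐ x ∂ν, a - r ≤ x) (hball : ∀ s ∈ Icc a b, δ ≤ μ (ball s r)) (hr : 0 ≤ r)
    (hδr : δ ≤ ENNReal.ofReal r) (h : levyProkhorovEDist ν μ < δ) (t : ℝ) :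
    ν (Iic t) ≤ μ (Iic (t + 3 * r)) := by
  have δ_le : δ.toReal ≤ r := ENNReal.toReal_le_of_le_ofReal hr hδr
  rcases lt_or_ge t (a - r) with hta | hta
  · exact (measure_Iic_eq_zero_of_ae_le hν hta).trans_le zero_le
  rcases le_or_gt b (t + 3 * r) with htb | htb
  · exact prob_le_one.trans_eq (measure_Iic_eq_one_of_ae_le hμ htb).symm
  calc ν (Iic t)
      ≤ μ (Iic (t + δ.toReal)) + δ := measure_Iic_le_of_levyProkhorovEDist_lt h t
    _ ≤ μ (Iic (t + δ.toReal)) + μ (ball (t + 2 * r) r) :=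
        add_le_add_right (hball _ ⟨by linarith, by linarith⟩) _
    _ ≤ μ (Iic (t + 3 * r)) := measure_Iic_add_measure_ball_le μ hr (by linarith) (by linarith)

lemma measure_Iic_le_of_forall_le_measure_ball_left (hμ : ∀ᵐ x ∂μ, a ≤ x)
    (hν : ∀ᵐ x ∂ν, x ≤ b + r) (hball : ∀ s ∈ Icc a b, δ ≤ μ (ball s r)) (hr : 0 ≤ r)
    (hδr : δ ≤ ENNReal.ofReal r) (h : levyProkhorovEDist μ ν < δ) (t : ℝ) :
    μ (Iic t) ≤ ν (Iic (t + 3 * r)) := by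
  have δ_le : δ.toReal ≤ r := ENNReal.toReal_le_of_le_ofReal hr hδr
  have δ_ne_top : δ ≠ ⊤ := ne_top_of_le_ne_top ENNReal.ofReal_ne_top hδr
  rcases lt_or_ge t a with hta | hta
  · exact (measure_Iic_eq_zero_of_ae_le hμ hta).trans_le zero_le
  rcases le_or_gt (b + r) (t + 3 * r) with htb | htb
  · exact prob_le_one.trans_eq (measure_Iic_eq_one_of_ae_le hν htb).symm
  refine (ENNReal.add_le_add_iff_right δ_ne_top).1 ?_
  calc μ (Iic t) + δ
      ≤ μ (Iic t) + μ (ball (t + r) r) :=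
        add_le_add_right (hball _ ⟨by linarith, by linarith⟩) _
    _ ≤ μ (Iic (t + 2 * r)) := measure_Iic_add_measure_ball_le μ hr (by linarith) (by linarith)
    _ ≤ ν (Iic (t + 2 * r + δ.toReal)) + δ := measure_Iic_le_of_levyProkhorovEDist_lt h _
    _ ≤ ν (Iic (t + 3 * r)) + δ :=
        add_le_add_left (measure_mono (Iic_subset_Iic.2 (by linarith))) _

lemma wassersteinInf_le_of_levyProkhorovEDist_lt (hμ : ∀ᵐ x ∂μ, x ∈ Icc a b)
    (hν : ∀ᵐ x ∂ν, x ∈ Icc (a - r) (b + r)) (hball : ∀ s ∈ Icc a b, δ ≤ μ (ball s r))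
    (hr : 0 ≤ r) (hδr : δ ≤ ENNReal.ofReal r) (h : levyProkhorovEDist ν μ < δ) :
    wassersteinInf ν μ ≤ ENNReal.ofReal (3 * r) :=
  wassersteinInf_le_of_measure_Iic_le
    (measure_Iic_le_of_forall_le_measure_ball_right (hμ.mono fun _ hx => hx.2)
      (hν.mono fun _ hx => hx.1) hball hr hδr h)
    (measure_Iic_le_of_forall_le_measure_ball_left (hμ.mono fun _ hx => hx.1)
      (hν.mono fun _ hx => hx.2) hball hr hδr (levyProkhorovEDist_comm ν μ ▸ h))

end

/-! ### Convergence -/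

lemma tendsto_integral_iff_tendsto_levyProkhorovEDist {X ι : Type*} [PseudoMetricSpace X]
    [TopologicalSpace.SeparableSpace X] [MeasurableSpace X] [BorelSpace X] {l : Filter ι}
    (μ : Measure X) [IsProbabilityMeasure μ] (ν : ι → Measure X) [∀ i, IsProbabilityMeasure (ν i)] :
    (∀ f : BoundedContinuousFunction X ℝ,
        Tendsto (fun i => ∫ x, f x ∂ν i) l (𝓝 (∫ x, f x ∂μ))) ↔
      Tendsto (fun i => levyProkhorovEDist (ν i) μ) l (𝓝 0) := by
  let P : ι → ProbabilityMeasure X := fun i => ⟨ν i, inferInstance⟩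
  let Q : ProbabilityMeasure X := ⟨μ, inferInstance⟩
  calc _ ↔ Tendsto P l (𝓝 Q) :=
        ProbabilityMeasure.tendsto_iff_forall_integral_tendsto.symm
    _ ↔ Tendsto (fun i => LevyProkhorov.probabilityMeasureHomeomorph (P i)) l
          (𝓝 (LevyProkhorov.probabilityMeasureHomeomorph Q)) :=
        LevyProkhorov.probabilityMeasureHomeomorph.isInducing.tendsto_nhds_iff
    _ ↔ _ := tendsto_iff_edist_tendsto_0

lemma isBoundedUnder_ae_id {μ : Measure ℝ} {c d : ℝ} (h : ∀ᵐ x ∂μ, x ∈ Icc c d) :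
    IsBoundedUnder (· ≤ ·) (ae μ) (id : ℝ → ℝ) ∧ IsBoundedUnder (· ≥ ·) (ae μ) (id : ℝ → ℝ) :=
  ⟨isBoundedUnder_of_eventually_le (h.mono fun _ hx => hx.2),
    isBoundedUnder_of_eventually_ge (h.mono fun _ hx => hx.1)⟩

section

variable {ι : Type*} {l : Filter ι} {μ : Measure ℝ} {ν : ι → Measure ℝ} {a b : ℝ}

lemma eventually_ae_mem_Icc_of_tendsto_essSup_essInf
    (hν_le : ∀ i, IsBoundedUnder (· ≤ ·) (ae (ν i)) (id : ℝ → ℝ))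
    (hν_ge : ∀ i, IsBoundedUnder (· ≥ ·) (ae (ν i)) (id : ℝ → ℝ))
    (hsup : Tendsto (fun i => essSup (id : ℝ → ℝ) (ν i)) l (𝓝 b))
    (hinf : Tendsto (fun i => essInf (id : ℝ → ℝ) (ν i)) l (𝓝 a)) {r : ℝ} (hr : 0 < r) :
    ∀ᶠ i in l, ∀ᵐ x ∂ν i, x ∈ Icc (a - r) (b + r) := by
  filter_upwards [hsup.eventually_lt_const (lt_add_of_pos_right b hr),
    hinf.eventually_const_lt (sub_lt_self a hr)] with i hsup_lt hinf_gt
  filter_upwards [ae_lt_of_essSup_lt hsup_lt (hν_le i), ae_lt_of_lt_essInf hinf_gt (hν_ge i)]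
    with x hxb hxa
  exact ⟨hxa.le, hxb.le⟩

lemma tendsto_wassersteinInf_of_tendsto_levyProkhorovEDist [IsProbabilityMeasure μ]
    [∀ i, IsProbabilityMeasure (ν i)] (hsupp : μ.support = Icc a b)
    (hLP : Tendsto (fun i => levyProkhorovEDist (ν i) μ) l (𝓝 0))
    (hν : ∀ r > 0, ∀ᶠ i in l, ∀ᵐ x ∂ν i, x ∈ Icc (a - r) (b + r)) :
    Tendsto (fun i => wassersteinInf (ν i) μ) l (𝓝 0) := by
  have hμ : ∀ᵐ x ∂μ, x ∈ Icc a b := hsupp ▸ Measure.support_mem_ae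
  refine ENNReal.tendsto_nhds_zero.2 fun η hη => ?_
  obtain ⟨ε, -, hε, hεη⟩ := ENNReal.lt_iff_exists_real_btwn.1 hη
  have hr : 0 < ε / 3 := div_pos (ENNReal.ofReal_pos.1 hε) three_pos
  obtain ⟨m, hm, hball⟩ := exists_pos_forall_le_measure_ball isCompact_Icc hsupp.ge hr
  filter_upwards [hν _ hr, hLP.eventually_lt_const (lt_min hm (ENNReal.ofReal_pos.2 hr))]
    with i hνi hLPi
  calc wassersteinInf (ν i) μ
      ≤ ENNReal.ofReal (3 * (ε / 3)) :=
        wassersteinInf_le_of_levyProkhorovEDist_lt hμ hνi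
          (fun s hs => (min_le_left _ _).trans (hball s hs)) hr.le (min_le_right _ _) hLPi
    _ = ENNReal.ofReal ε := by rw [mul_div_cancel₀ ε three_ne_zero]
    _ ≤ η := hεη.le

end

end

theorem wassersteinInf_convergence_iff_general {ι : Type*} {l : Filter ι}
    (μZ : Measure ℝ) [IsProbabilityMeasure μZ] {a b : ℝ}
    (hsupp : measureSupport μZ = Set.Icc a b)
    (ν : ι → Measure ℝ) [∀ i, IsProbabilityMeasure (ν i)]
    (hbdd : ∀ i, ∃ R : ℝ, (ν i) (Set.Icc (-R) R)ᶜ = 0) :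
    Tendsto (fun i => wassersteinInf (ν i) μZ) l (𝓝 0) ↔
      ((∀ f : BoundedContinuousFunction ℝ ℝ,
          Tendsto (fun i => ∫ x, f x ∂(ν i)) l (𝓝 (∫ x, f x ∂μZ))) ∧
        Tendsto (fun i => essSup (id : ℝ → ℝ) (ν i)) l (𝓝 b) ∧
        Tendsto (fun i => essInf (id : ℝ → ℝ) (ν i)) l (𝓝 a)) := by
  rw [measureSupport_eq_support] at hsupp
  have hab : a ≤ b := Set.nonempty_Icc.1 (hsupp ▸ Measure.nonempty_support (NeZero.ne μZ))
  have hb : essSup (id : ℝ → ℝ) μZ = b :=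
    essSup_id_eq_of_isGreatest_support (hsupp ▸ isGreatest_Icc hab)
  have ha : essInf (id : ℝ → ℝ) μZ = a :=
    essInf_id_eq_of_isLeast_support (hsupp ▸ isLeast_Icc hab)
  have hμZ_bdd := isBoundedUnder_ae_id (μ := μZ) (hsupp ▸ Measure.support_mem_ae)
  have hν_bdd := fun i => isBoundedUnder_ae_id (hbdd i).choose_spec
  rw [tendsto_integral_iff_tendsto_levyProkhorovEDist]
  constructor
  · intro hW
    have squeeze : ∀ {u : ι → ℝ≥0∞}, (∀ i, u i ≤ wassersteinInf (ν i) μZ) → Tendsto u l (𝓝 0) :=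
      fun hu => tendsto_const_nhds.squeeze hW (fun _ => zero_le) hu
    rw [← hb, ← ha]
    exact ⟨squeeze fun i => levyProkhorovEDist_le_wassersteinInf (ν i) μZ,
      tendsto_iff_edist_tendsto_0.2
        (squeeze fun i => edist_essSup_le_wassersteinInf (hν_bdd i).1 hμZ_bdd.1),
      tendsto_iff_edist_tendsto_0.2
        (squeeze fun i => edist_essInf_le_wassersteinInf (hν_bdd i).2 hμZ_bdd.2)⟩
  · rintro ⟨hLP, hsup, hinf⟩
    exact tendsto_wassersteinInf_of_tendsto_levyProkhorovEDist hsupp hLP fun r hr =>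
      eventually_ae_mem_Icc_of_tendsto_essSup_essInf (fun i => (hν_bdd i).1)
        (fun i => (hν_bdd i).2) hsup hinf hr

/-- **Convergence in the `∞`-Wasserstein distance** (Aubrun–Szarek–Ye, Lemma 7).
Let `Z` have law `μ_Z` whose support equals a bounded interval `[a,b]`, `a < b`, and let
`(Y_n)` be bounded real random variables with laws `ν n`.  Then `d_∞(Y_n, Z) → 0` iff
`Y_n → Z` weakly, `ess sup Y_n → b` and `ess inf Y_n → a`. -/
theorem wassersteinInf_convergence_iff
    (μZ : Measure ℝ) (hμZ : IsProbabilityMeasure μZ) (a b : ℝ) (hab : a < b)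
    (hsupp : measureSupport μZ = Set.Icc a b)
    (ν : ℕ → Measure ℝ) (hν : ∀ n, IsProbabilityMeasure (ν n))
    (hbdd : ∀ n, ∃ R : ℝ, (ν n) (Set.Icc (-R) R)ᶜ = 0) :
    Tendsto (fun n => wassersteinInf (ν n) μZ) atTop (𝓝 0) ↔
      ((∀ f : BoundedContinuousFunction ℝ ℝ,
          Tendsto (fun n => ∫ x, f x ∂(ν n)) atTop (𝓝 (∫ x, f x ∂μZ))) ∧
        Tendsto (fun n => essSup (id : ℝ → ℝ) (ν n)) atTop (𝓝 b) ∧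
        Tendsto (fun n => essInf (id : ℝ → ℝ) (ν n)) atTop (𝓝 a)) :=
  wassersteinInf_convergence_iff_general μZ hsupp ν hbdd
end

section
/- Let Z be a non-constant bounded real random variable with mean 0 and law μ_Z. Then for every ε > 0 there exists η > 0 (depending only on Z and ε) such that for every integer n ≥ 1 and all vectors x, y ∈ R^{n,0} with y ≠ 0 satisfying d_∞(ν_x, μ_Z) ≤ η and d_∞(ν_y, μ_Z) ≤ η, one has δ(x,y) ≤ 1 + ε, i.e., x ≺ (1+ε)·y. -/
open MeasureTheory Filter Topology
open scoped ENNReal BigOperators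

noncomputable section

/-- The `n`-point empirical measure `ν_x = (1/n) Σ δ_{x_k}` of a vector `x ∈ ℝⁿ`. -/
def empMeasure {n : ℕ} (x : Fin n → ℝ) : Measure ℝ :=
  ((n : ℝ≥0∞))⁻¹ • ∑ k : Fin n, Measure.dirac (x k)

/-- The sum of the `k` largest coordinates of a vector `x ∈ ℝⁿ`. -/
def sumLargest {n : ℕ} (x : Fin n → ℝ) (k : ℕ) : ℝ :=
  sSup {r : ℝ | ∃ s : Finset (Fin n), s.card = k ∧ r = ∑ i ∈ s, x i}

/-- Majorization `x ≺ y` for vectors in the hyperplane of sum-zero vectors: for every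
`k`, the sum of the `k` largest coordinates of `x` is at most the corresponding sum
for `y`. -/
def IsMajorizedBy {n : ℕ} (x y : Fin n → ℝ) : Prop :=
  ∀ k : ℕ, k ≤ n → sumLargest x k ≤ sumLargest y k

end

/-! The sum of the `k` largest coordinates of `x` is the minimum over `t` of
`k * t + ∑ i, (x i - t)⁺`. Transporting the `1`-Lipschitz hinge `(· - t)⁺` first from `ν_x` to `μ`
and then from `μ` to `ν_y`, along couplings that move mass by at most `h`, shifts `t` by `2 * h` in
total, so the sums of the `k` largest coordinates of `x` and `y` differ by at most `2 * h * k`.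
The same bound for `-x` and `-y` improves this to `2 * h * min k (n - k)` when the coordinates sum
to zero. On the other hand the sum of the `k` largest coordinates of `y` is itself at least
`min k (n - k)` times half the mean of `|y i|`, and this mean is within `h` of `∫ |v| ∂μ > 0`.
Hence the error is relatively small, uniformly in `k` and `n`. -/

section SumLargest

variable {n k : ℕ}

lemma sum_le_sumLargest (x : Fin n → ℝ) (s : Finset (Fin n)) :
    ∑ i ∈ s, x i ≤ sumLargest x s.card := by
  have hfinite : {r : ℝ | ∃ u : Finset (Fin n), u.card = s.card ∧ r = ∑ i ∈ u, x i}.Finite :=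
    (Set.finite_range fun u : Finset (Fin n) ↦ ∑ i ∈ u, x i).subset
      fun _ ⟨u, _, hr⟩ ↦ ⟨u, hr.symm⟩
  exact le_csSup hfinite.bddAbove ⟨s, rfl, rfl⟩

lemma sumLargest_le {x : Fin n → ℝ} {c : ℝ} (hk : k ≤ n)
    (h : ∀ s : Finset (Fin n), s.card = k → ∑ i ∈ s, x i ≤ c) : sumLargest x k ≤ c := by
  obtain ⟨s, -, hs⟩ := (Finset.univ : Finset (Fin n)).exists_subset_card_eq (by simpa using hk)
  refine csSup_le ⟨_, s, hs, rfl⟩ ?_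
  rintro _ ⟨u, hu, rfl⟩
  exact h u hu

lemma sumLargest_smul {c : ℝ} (hc : 0 ≤ c) (x : Fin n → ℝ) (k : ℕ) :
    sumLargest (c • x) k = c * sumLargest x k := by
  rw [sumLargest, sumLargest, ← smul_eq_mul, ← Real.sSup_smul_of_nonneg hc]
  congr 1
  ext r
  simp only [Set.mem_ofPred_eq, Set.mem_smul_set, Pi.smul_apply, ← Finset.smul_sum]
  constructor
  · rintro ⟨s, hs, rfl⟩
    exact ⟨_, ⟨s, hs, rfl⟩, rfl⟩
  · rintro ⟨_, ⟨s, hs, rfl⟩, rfl⟩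
    exact ⟨s, hs, rfl⟩

lemma exists_finset_card_eq_and_threshold {ι α : Type*} [Fintype ι] [LinearOrder α] [Nonempty α]
    (y : ι → α) (hk : k ≤ Fintype.card ι) :
    ∃ (s : Finset ι) (t : α), s.card = k ∧ (∀ i ∈ s, t ≤ y i) ∧ ∀ i ∉ s, y i ≤ t := by
  classical
  induction k with
  | zero =>
    obtain ⟨t, ht⟩ := (Set.finite_range y).bddAbove
    exact ⟨∅, t, rfl, by simp, fun i _ ↦ ht ⟨i, rfl⟩⟩
  | succ k ih =>
    obtain ⟨s, t, hs, hts, hst⟩ := ih (by omega)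
    have hne : sᶜ.Nonempty := by
      rw [← Finset.card_pos, Finset.card_compl]
      omega
    obtain ⟨j, hj, hmax⟩ := sᶜ.exists_max_image y hne
    rw [Finset.mem_compl] at hj
    refine ⟨insert j s, y j, by rw [Finset.card_insert_of_notMem hj, hs], ?_, ?_⟩
    · intro i hi
      rcases Finset.mem_insert.1 hi with rfl | hi
      · exact le_rfl
      · exact (hst j hj).trans (hts i hi)
    · exact fun i hi ↦ hmax i (Finset.mem_compl.2 fun his ↦ hi (Finset.mem_insert_of_mem his))

/-- The objective `k t + ∑ᵢ (xᵢ - t)⁺`, whose minimum over `t` is the sum of the `k` largest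
coordinates of `x`. -/
noncomputable def hingeSum (x : Fin n → ℝ) (k : ℕ) (t : ℝ) : ℝ :=
  k * t + ∑ i, (x i - t)⁺

lemma sumLargest_le_hingeSum (x : Fin n → ℝ) (hk : k ≤ n) (t : ℝ) :
    sumLargest x k ≤ hingeSum x k t := by
  refine sumLargest_le hk fun s hs ↦ ?_
  calc ∑ i ∈ s, x i ≤ ∑ i ∈ s, (t + (x i - t)⁺) :=
        Finset.sum_le_sum fun i _ ↦ by linarith [le_posPart (x i - t)]
    _ = k * t + ∑ i ∈ s, (x i - t)⁺ := by
        rw [Finset.sum_add_distrib, Finset.sum_const, hs, nsmul_eq_mul]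
    _ ≤ hingeSum x k t :=
        add_le_add_right (Finset.sum_le_univ_sum_of_nonneg fun i ↦ posPart_nonneg _) _

lemma exists_sumLargest_eq_hingeSum (x : Fin n → ℝ) (hk : k ≤ n) :
    ∃ t, sumLargest x k = hingeSum x k t := by
  obtain ⟨s, t, rfl, hts, hst⟩ := exists_finset_card_eq_and_threshold x (by simpa using hk)
  refine ⟨t, (sumLargest_le_hingeSum x hk t).antisymm ?_⟩
  calc hingeSum x s.card t = s.card * t + ∑ i ∈ s, (x i - t)⁺ := by
        rw [hingeSum, Finset.sum_subset s.subset_univ fun i _ hi ↦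
          posPart_eq_zero.2 (sub_nonpos.2 (hst i hi))]
    _ = ∑ i ∈ s, (t + (x i - t)⁺) := by
        rw [Finset.sum_add_distrib, Finset.sum_const, nsmul_eq_mul]
    _ = ∑ i ∈ s, x i := Finset.sum_congr rfl fun i hi ↦ by
        rw [posPart_eq_self.2 (sub_nonneg.2 (hts i hi)), add_sub_cancel]
    _ ≤ sumLargest x s.card := sum_le_sumLargest x s

lemma hingeSum_neg (x : Fin n → ℝ) (hk : k ≤ n) (t : ℝ) :
    hingeSum (-x) (n - k) (-t) = hingeSum x k t - ∑ i, x i := by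
  have hflip (i : Fin n) : ((-x) i - -t)⁺ = (x i - t)⁺ + t - x i := by
    have := posPart_sub_negPart (x i - t)
    rw [← posPart_neg] at this
    rw [Pi.neg_apply, show -x i - -t = -(x i - t) by ring]
    linarith
  simp only [hingeSum, hflip, Finset.sum_sub_distrib, Finset.sum_add_distrib, Finset.sum_const,
    Finset.card_univ, Fintype.card_fin, nsmul_eq_mul, Nat.cast_sub hk]
  ring

lemma sumLargest_neg_le (x : Fin n → ℝ) (hk : k ≤ n) :
    sumLargest (-x) (n - k) ≤ sumLargest x k - ∑ i, x i := by
  obtain ⟨t, ht⟩ := exists_sumLargest_eq_hingeSum x hk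
  rw [ht, ← hingeSum_neg x hk]
  exact sumLargest_le_hingeSum _ (n.sub_le k) _

lemma sumLargest_neg (x : Fin n → ℝ) (hk : k ≤ n) :
    sumLargest (-x) (n - k) = sumLargest x k - ∑ i, x i := by
  refine (sumLargest_neg_le x hk).antisymm ?_
  have h := sumLargest_neg_le (-x) (n.sub_le k)
  simp only [neg_neg, Nat.sub_sub_self hk, Pi.neg_apply, Finset.sum_neg_distrib] at h
  linarith

lemma sumLargest_le_add_of_sum_posPart_le {x y : Fin n → ℝ} {c : ℝ} (hk : k ≤ n)
    (h : ∀ t, ∑ i, (x i - (t + c))⁺ ≤ ∑ i, (y i - t)⁺) :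
    sumLargest x k ≤ sumLargest y k + k * c := by
  obtain ⟨t, ht⟩ := exists_sumLargest_eq_hingeSum y hk
  calc sumLargest x k ≤ hingeSum x k (t + c) := sumLargest_le_hingeSum x hk _
    _ = k * (t + c) + ∑ i, (x i - (t + c))⁺ := rfl
    _ ≤ k * (t + c) + ∑ i, (y i - t)⁺ := add_le_add_right (h t) _
    _ = sumLargest y k + k * c := by rw [ht, hingeSum]; ring

lemma sum_abs_eq_two_mul_sum_posPart {ι : Type*} [Fintype ι] {y : ι → ℝ} (hy : ∑ i, y i = 0) :
    ∑ i, |y i| = 2 * ∑ i, (y i)⁺ := by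
  have habs (i : ι) : |y i| = 2 * (y i)⁺ - y i := by
    linarith [posPart_add_negPart (y i), posPart_sub_negPart (y i)]
  simp only [habs, Finset.sum_sub_distrib, hy, sub_zero, Finset.mul_sum]

lemma mul_sum_posPart_le_mul_hingeSum (y : Fin n → ℝ) (hk : k ≤ n) {t : ℝ} (ht : 0 ≤ t) :
    k * ∑ i, (y i)⁺ ≤ n * hingeSum y k t := by
  have hshift : ∑ i, (y i)⁺ ≤ n * t + ∑ i, (y i - t)⁺ := by
    calc ∑ i, (y i)⁺ ≤ ∑ i, (t + (y i - t)⁺) := Finset.sum_le_sum fun i _ ↦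
          sup_le (by linarith [le_posPart (y i - t)]) (add_nonneg ht (posPart_nonneg _))
      _ = n * t + ∑ i, (y i - t)⁺ := by simp [Finset.sum_add_distrib]
  have hnonneg : 0 ≤ ∑ i, (y i - t)⁺ := Finset.sum_nonneg fun i _ ↦ posPart_nonneg _
  calc k * ∑ i, (y i)⁺ ≤ k * (n * t + ∑ i, (y i - t)⁺) := by gcongr
    _ = n * (k * t) + k * ∑ i, (y i - t)⁺ := by ring
    _ ≤ n * (k * t) + n * ∑ i, (y i - t)⁺ :=
        add_le_add_right (mul_le_mul_of_nonneg_right (Nat.cast_le.2 hk) hnonneg) _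
    _ = n * hingeSum y k t := by rw [hingeSum, mul_add]

lemma min_mul_sum_abs_le_mul_sumLargest {y : Fin n → ℝ} (hy : ∑ i, y i = 0) (hk : k ≤ n) :
    (min k (n - k) : ℕ) * ∑ i, |y i| ≤ 2 * n * sumLargest y k := by
  obtain ⟨t, ht⟩ := exists_sumLargest_eq_hingeSum y hk
  rcases le_total 0 t with ht0 | ht0
  · calc (min k (n - k) : ℕ) * ∑ i, |y i| ≤ k * ∑ i, |y i| := by
          gcongr
          exact min_le_left _ _
      _ = 2 * (k * ∑ i, (y i)⁺) := by rw [sum_abs_eq_two_mul_sum_posPart hy]; ring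
      _ ≤ 2 * (n * hingeSum y k t) :=
          mul_le_mul_of_nonneg_left (mul_sum_posPart_le_mul_hingeSum y hk ht0) zero_le_two
      _ = 2 * n * sumLargest y k := by rw [ht, mul_assoc]
  · have hneg : ∑ i, (-y) i = 0 := by simp [hy]
    calc (min k (n - k) : ℕ) * ∑ i, |y i| ≤ (n - k : ℕ) * ∑ i, |y i| := by
          gcongr
          exact min_le_right _ _
      _ = (n - k : ℕ) * ∑ i, |(-y) i| := by simp only [Pi.neg_apply, abs_neg]
      _ = 2 * ((n - k : ℕ) * ∑ i, ((-y) i)⁺) := by rw [sum_abs_eq_two_mul_sum_posPart hneg]; ring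
      _ ≤ 2 * (n * hingeSum (-y) (n - k) (-t)) :=
          mul_le_mul_of_nonneg_left
            (mul_sum_posPart_le_mul_hingeSum (-y) (n.sub_le k) (neg_nonneg.2 ht0)) zero_le_two
      _ = 2 * n * sumLargest y k := by rw [hingeSum_neg y hk, hy, sub_zero, ht, mul_assoc]

lemma isMajorizedBy_one_add_smul_of_sumLargest_le {x y : Fin n → ℝ} {a c ε : ℝ} (hn : n ≠ 0)
    (hε : 0 ≤ ε) (hy : ∑ i, y i = 0)
    (hxy : ∀ k ≤ n, sumLargest x k ≤ sumLargest y k + (min k (n - k) : ℕ) * c)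
    (ha : n * a ≤ ∑ i, |y i|) (hc : 2 * c ≤ ε * a) :
    IsMajorizedBy x ((1 + ε) • y) := by
  intro k hk
  rw [sumLargest_smul (by positivity)]
  have hlower : (min k (n - k) : ℕ) * a ≤ 2 * sumLargest y k := by
    refine le_of_mul_le_mul_left ?_ (show (0 : ℝ) < n by positivity)
    calc n * ((min k (n - k) : ℕ) * a) = (min k (n - k) : ℕ) * (n * a) := by ring
      _ ≤ (min k (n - k) : ℕ) * ∑ i, |y i| := by gcongr
      _ ≤ 2 * n * sumLargest y k := min_mul_sum_abs_le_mul_sumLargest hy hk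
      _ = n * (2 * sumLargest y k) := by ring
  have herror : (min k (n - k) : ℕ) * c ≤ ε * sumLargest y k := by
    have h₁ : (min k (n - k) : ℕ) * (2 * c) ≤ (min k (n - k) : ℕ) * (ε * a) := by gcongr
    have h₂ : ε * ((min k (n - k) : ℕ) * a) ≤ ε * (2 * sumLargest y k) := by gcongr
    linarith
  linarith [hxy k hk]

end SumLargest

section Coupling

/-- The measures `ν` and `μ` admit a coupling that moves mass by at most `h`, i.e. the infimum
defining the `∞`-Wasserstein distance has a competitor with value at most `h`. -/
def CoupledWithin {α : Type*} [PseudoMetricSpace α] [MeasurableSpace α] (h : ℝ)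
    (ν μ : Measure α) : Prop :=
  ∃ π : Measure (α × α), π.map Prod.fst = ν ∧ π.map Prod.snd = μ ∧ ∀ᵐ p ∂π, dist p.1 p.2 ≤ h

lemma coupledWithin_of_wassersteinInf_lt {ν μ : Measure ℝ} {h : ℝ}
    (hW : wassersteinInf ν μ < ENNReal.ofReal h) : CoupledWithin h ν μ := by
  simp only [wassersteinInf, iInf_lt_iff] at hW
  obtain ⟨π, ⟨hfst, hsnd⟩, hπ⟩ := hW
  have hh : 0 ≤ h := (ENNReal.ofReal_pos.1 (bot_le.trans_lt hπ)).le
  refine ⟨π, hfst, hsnd, ?_⟩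
  filter_upwards [ENNReal.ae_le_essSup (μ := π) fun p : ℝ × ℝ ↦ ENNReal.ofReal |p.1 - p.2|]
    with p hp
  exact (ENNReal.ofReal_le_ofReal_iff hh).1 (hp.trans hπ.le)

namespace CoupledWithin

variable {α : Type*} [PseudoMetricSpace α] [MeasurableSpace α] {ν μ : Measure α} {h : ℝ}

protected lemma symm (H : CoupledWithin h ν μ) : CoupledWithin h μ ν := by
  obtain ⟨π, hfst, hsnd, hπ⟩ := H
  refine ⟨π.map Prod.swap, ?_, ?_, ?_⟩
  · rwa [Measure.map_map measurable_fst measurable_swap]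
  · rwa [Measure.map_map measurable_snd measurable_swap]
  · refine (MeasurableEquiv.prodComm.measurableEmbedding.ae_map_iff).2 ?_
    filter_upwards [hπ] with p hp
    exact (dist_comm _ _).trans_le hp

lemma integral_le_integral (H : CoupledWithin h ν μ) {f g : α → ℝ} (hf : Integrable f ν)
    (hg : Integrable g μ) (hfg : ∀ u v, dist u v ≤ h → f u ≤ g v) :
    ∫ u, f u ∂ν ≤ ∫ v, g v ∂μ := by
  obtain ⟨π, rfl, rfl, hπ⟩ := H
  rw [integral_map measurable_fst.aemeasurable hf.1, integral_map measurable_snd.aemeasurable hg.1]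
  refine integral_mono_ae (hf.comp_measurable measurable_fst) (hg.comp_measurable measurable_snd) ?_
  filter_upwards [hπ] with p hp using hfg _ _ hp

end CoupledWithin

end Coupling

section EmpiricalMeasure

variable {n : ℕ}

lemma integrable_empMeasure (hn : n ≠ 0) (x : Fin n → ℝ) (f : ℝ → ℝ) :
    Integrable f (empMeasure x) :=
  (integrable_finsetSum_measure.2 fun _ _ ↦ integrable_dirac (by simp)).smul_measure (by simpa)

lemma integral_empMeasure (x : Fin n → ℝ) (f : ℝ → ℝ) :
    ∫ u, f u ∂(empMeasure x) = (n : ℝ)⁻¹ * ∑ i, f (x i) := by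
  rw [empMeasure, integral_smul_measure,
    integral_finsetSum_measure fun _ _ ↦ integrable_dirac (by simp)]
  simp

variable {μ : Measure ℝ} {x y : Fin n → ℝ} {h : ℝ} {φ : ℝ → ℝ}

lemma sum_comp_le_sum_comp_of_coupledWithin (hn : n ≠ 0) (Hx : CoupledWithin h (empMeasure x) μ)
    (Hy : CoupledWithin h (empMeasure y) μ) {f g w : ℝ → ℝ} (hw : Integrable w μ)
    (hfw : ∀ u v, dist u v ≤ h → f u ≤ w v) (hwg : ∀ u v, dist u v ≤ h → w u ≤ g v) :
    ∑ i, f (x i) ≤ ∑ i, g (y i) := by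
  have hle : ∫ u, f u ∂(empMeasure x) ≤ ∫ u, g u ∂(empMeasure y) :=
    (Hx.integral_le_integral (integrable_empMeasure hn x f) hw hfw).trans
      (Hy.symm.integral_le_integral hw (integrable_empMeasure hn y g) hwg)
  rw [integral_empMeasure, integral_empMeasure] at hle
  exact le_of_mul_le_mul_left hle (by positivity)

lemma sumLargest_comp_le_of_coupledWithin [IsFiniteMeasure μ] {k : ℕ} (hn : n ≠ 0) (hk : k ≤ n)
    (hφ : LipschitzWith 1 φ) (hφμ : Integrable φ μ) (Hx : CoupledWithin h (empMeasure x) μ)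
    (Hy : CoupledWithin h (empMeasure y) μ) :
    sumLargest (φ ∘ x) k ≤ sumLargest (φ ∘ y) k + k * (2 * h) := by
  have hshift (s u v : ℝ) (huv : dist u v ≤ h) : (φ u - (s + h))⁺ ≤ (φ v - s)⁺ := by
    have hle := hφ.le_add_mul u v
    rw [NNReal.coe_one, one_mul] at hle
    exact posPart_mono (by linarith)
  refine sumLargest_le_add_of_sum_posPart_le hk fun t ↦ ?_
  refine sum_comp_le_sum_comp_of_coupledWithin (f := fun u ↦ (φ u - (t + 2 * h))⁺)
    (g := fun u ↦ (φ u - t)⁺) hn Hx Hy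
    (hφμ.sub (integrable_const (t + h))).pos_part (fun u v huv ↦ ?_) (hshift t)
  rw [two_mul, ← add_assoc]
  exact hshift (t + h) u v huv

lemma sumLargest_le_add_min_of_coupledWithin [IsFiniteMeasure μ] (hn : n ≠ 0)
    (hμ : Integrable id μ) (hxy : ∑ i, x i = ∑ i, y i) (Hx : CoupledWithin h (empMeasure x) μ)
    (Hy : CoupledWithin h (empMeasure y) μ) {k : ℕ} (hk : k ≤ n) :
    sumLargest x k ≤ sumLargest y k + (min k (n - k) : ℕ) * (2 * h) := by
  rcases min_choice k (n - k) with hmin | hmin <;> rw [hmin]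
  · exact sumLargest_comp_le_of_coupledWithin hn hk LipschitzWith.id hμ Hx Hy
  · have hneg : sumLargest (-x) (n - k) ≤ sumLargest (-y) (n - k) + (n - k : ℕ) * (2 * h) :=
      sumLargest_comp_le_of_coupledWithin hn (n.sub_le k) LipschitzWith.id.neg hμ.neg Hx Hy
    rw [sumLargest_neg x hk, sumLargest_neg y hk] at hneg
    linarith

lemma mul_integral_abs_sub_le_sum_abs [IsProbabilityMeasure μ] (hn : n ≠ 0) (hμ : Integrable id μ)
    (Hy : CoupledWithin h (empMeasure y) μ) : n * (∫ v, |v| ∂μ - h) ≤ ∑ i, |y i| := by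
  have habs : Integrable (fun v : ℝ ↦ |v|) μ := hμ.abs
  have hle : ∫ v, (|v| - h) ∂μ ≤ ∫ u, |u| ∂(empMeasure y) :=
    Hy.symm.integral_le_integral (habs.sub (integrable_const h)) (integrable_empMeasure hn y _)
      fun u v huv ↦ by linarith [abs_sub_abs_le_abs_sub u v, Real.dist_eq u v]
  have hsub : ∫ v, (|v| - h) ∂μ = ∫ v, |v| ∂μ - h := by
    rw [integral_sub habs (integrable_const h), integral_const, probReal_univ, one_smul]
  rwa [hsub, integral_empMeasure, le_inv_mul_iff₀ (by positivity)] at hle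

end EmpiricalMeasure

lemma integral_abs_pos_of_ne_dirac {μ : Measure ℝ} [IsProbabilityMeasure μ] (hμ : Integrable id μ)
    (hne : μ ≠ Measure.dirac 0) : 0 < ∫ v, |v| ∂μ := by
  refine (integral_nonneg fun v ↦ abs_nonneg v).lt_of_ne' fun hzero ↦ hne ?_
  have hae : id =ᵐ[μ] fun _ ↦ (0 : ℝ) := by
    filter_upwards [(integral_eq_zero_iff_of_nonneg (fun v ↦ abs_nonneg v) hμ.abs).1 hzero]
      with v hv using abs_eq_zero.1 hv
  calc μ = μ.map id := Measure.map_id.symm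
    _ = μ.map fun _ ↦ 0 := Measure.map_congr hae
    _ = Measure.dirac 0 := by rw [Measure.map_const, measure_univ, one_smul]

theorem majorization_from_wasserstein_general {m ε : ℝ} (hm : 0 < m) (hε : 0 < ε) :
    ∃ η : ℝ, 0 < η ∧ ∀ μ : Measure ℝ, IsProbabilityMeasure μ → Integrable id μ →
      m ≤ ∫ v, |v| ∂μ → ∀ (n : ℕ) (x y : Fin n → ℝ), ∑ i, x i = 0 → ∑ i, y i = 0 →
        wassersteinInf (empMeasure x) μ ≤ ENNReal.ofReal η →
        wassersteinInf (empMeasure y) μ ≤ ENNReal.ofReal η →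
        IsMajorizedBy x ((1 + ε) • y) := by
  obtain ⟨h, hh, hhε⟩ : ∃ h : ℝ, 0 < h ∧ 2 * (2 * h) = ε * (m - h) :=
    ⟨ε * m / (4 + ε), by positivity, by field_simp; ring⟩
  refine ⟨h / 2, by positivity, fun μ _ hμ hmμ n x y hx hy hWx hWy ↦ ?_⟩
  rcases eq_or_ne n 0 with rfl | hn
  · exact fun k _ ↦ (congrArg (sumLargest · k) (Subsingleton.elim x _)).le
  have hlt : ENNReal.ofReal (h / 2) < ENNReal.ofReal h :=
    (ENNReal.ofReal_lt_ofReal_iff hh).2 (half_lt_self hh)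
  have Hx := coupledWithin_of_wassersteinInf_lt (hWx.trans_lt hlt)
  have Hy := coupledWithin_of_wassersteinInf_lt (hWy.trans_lt hlt)
  refine isMajorizedBy_one_add_smul_of_sumLargest_le hn hε.le hy
    (fun k hk ↦ sumLargest_le_add_min_of_coupledWithin hn hμ (hx.trans hy.symm) Hx Hy hk)
    (mul_integral_abs_sub_le_sum_abs hn hμ Hy) ?_
  rw [hhε]
  gcongr

/-- **Quantitative majorization from Wasserstein approximation**
(Aubrun–Szarek–Ye, Lemma 8).  Let `Z` be a non-constant bounded random variable with
mean `0` and law `μ_Z`.  For every `ε > 0` there is `η > 0` such that for every `n` and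
all sum-zero vectors `x, y ∈ ℝⁿ` with `y ≠ 0`, `d_∞(ν_x, μ_Z) ≤ η` and
`d_∞(ν_y, μ_Z) ≤ η`, one has `δ(x,y) ≤ 1 + ε`, i.e. `x ≺ (1+ε)·y`. -/
theorem majorization_from_wasserstein
    (μZ : Measure ℝ) (hμZ : IsProbabilityMeasure μZ)
    (hbdd : ∃ R : ℝ, μZ (Set.Icc (-R) R)ᶜ = 0)
    (hnc : ∀ c : ℝ, μZ ≠ Measure.dirac c)
    (hmean : ∫ x, x ∂μZ = 0) :
    ∀ ε : ℝ, 0 < ε → ∃ η : ℝ, 0 < η ∧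
      ∀ n : ℕ, 1 ≤ n → ∀ x y : Fin n → ℝ,
        (∑ i, x i) = 0 → (∑ i, y i) = 0 → y ≠ 0 →
        wassersteinInf (empMeasure x) μZ ≤ ENNReal.ofReal η →
        wassersteinInf (empMeasure y) μZ ≤ ENNReal.ofReal η →
        IsMajorizedBy x ((1 + ε) • y) := by
  intro ε hε
  obtain ⟨R, hR⟩ := hbdd
  have hintegrable : Integrable id μZ := Integrable.of_mem_Icc (-R) R aemeasurable_id hR
  obtain ⟨η, hη, hmajor⟩ :=
    majorization_from_wasserstein_general (integral_abs_pos_of_ne_dirac hintegrable (hnc 0)) hε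
  exact ⟨η, hη, fun n _ x y hx hy _ ↦ hmajor μZ hμZ hintegrable le_rfl n x y hx hy⟩
end

section
/- Let Z be a non-constant bounded real random variable with mean 0, set a = ess inf Z and b = ess sup Z (so a < 0 < b), and let ε > 0. Define f(t) = E|Z − t| and g(t) = E|(1+ε)Z − t| for t ∈ R. Then f(t) < g(t) for every t in the open interval ((1+ε)a, (1+ε)b). -/
open MeasureTheory
open scoped ENNReal

/-!
Since `Z - t` is the convex combination of `-t` and `(1+ε)Z - t` with weights `ε/(1+ε)` and
`1/(1+ε)`, convexity of the absolute value gives `(1+ε) f(t) ≤ ε |t| + g(t)`, so it suffices that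
`|t| < g(t)`. As `(1+ε)Z - t` has mean `-t`, this is the strict triangle inequality
`|E Y| < E|Y|` for a variable `Y` that takes both signs with positive probability.
-/

open Filter

section

variable {Ω : Type*} {mΩ : MeasurableSpace Ω} {μ : Measure Ω}

lemma integral_lt_integral_of_ae_le_of_frequently_lt {f g : Ω → ℝ} (hf : Integrable f μ)
    (hg : Integrable g μ) (hle : f ≤ᵐ[μ] g) (hlt : ∃ᶠ ω in ae μ, f ω < g ω) :
    ∫ ω, f ω ∂μ < ∫ ω, g ω ∂μ := by
  refine (integral_mono_ae hf hg hle).lt_of_ne fun heq ↦ hlt ?_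
  filter_upwards [(integral_eq_iff_of_ae_le hf hg hle).1 heq] with ω hω using hω.not_lt

lemma integral_lt_integral_abs_of_frequently_neg {Y : Ω → ℝ} (hY : Integrable Y μ)
    (hneg : ∃ᶠ ω in ae μ, Y ω < 0) : ∫ ω, Y ω ∂μ < ∫ ω, |Y ω| ∂μ :=
  integral_lt_integral_of_ae_le_of_frequently_lt hY hY.abs (.of_forall fun _ ↦ le_abs_self _)
    (hneg.mono fun _ hω ↦ hω.trans (abs_pos.2 hω.ne))

lemma abs_integral_lt_integral_abs {Y : Ω → ℝ} (hY : Integrable Y μ)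
    (hneg : ∃ᶠ ω in ae μ, Y ω < 0) (hpos : ∃ᶠ ω in ae μ, 0 < Y ω) :
    |∫ ω, Y ω ∂μ| < ∫ ω, |Y ω| ∂μ := by
  refine abs_lt.2 ⟨neg_lt.1 ?_, integral_lt_integral_abs_of_frequently_neg hY hneg⟩
  simpa only [Pi.neg_apply, integral_neg, abs_neg] using
    integral_lt_integral_abs_of_frequently_neg hY.neg (hpos.mono fun _ ↦ neg_lt_zero.2)

variable {E : Type*} [NormedAddCommGroup E] [NormedSpace ℝ E] {ε : ℝ}

lemma one_add_mul_norm_sub_le (hε : 0 ≤ ε) (x t : E) :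
    (1 + ε) * ‖x - t‖ ≤ ε * ‖t‖ + ‖(1 + ε) • x - t‖ :=
  calc (1 + ε) * ‖x - t‖ = ‖(1 + ε) • (x - t)‖ := by
        rw [norm_smul_of_nonneg (by positivity)]
    _ = ‖((1 + ε) • x - t) - ε • t‖ := by congr 1; module
    _ ≤ ‖(1 + ε) • x - t‖ + ‖ε • t‖ := norm_sub_le _ _
    _ = ε * ‖t‖ + ‖(1 + ε) • x - t‖ := by rw [norm_smul_of_nonneg hε, add_comm]

lemma one_add_mul_integral_norm_sub_le [IsProbabilityMeasure μ] {X : Ω → E} (hX : Integrable X μ)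
    (hε : 0 ≤ ε) (t : E) :
    (1 + ε) * ∫ ω, ‖X ω - t‖ ∂μ ≤ ε * ‖t‖ + ∫ ω, ‖(1 + ε) • X ω - t‖ ∂μ := by
  have hdil : Integrable (fun ω ↦ ‖(1 + ε) • X ω - t‖) μ :=
    ((hX.smul (1 + ε)).sub (integrable_const t)).norm
  calc (1 + ε) * ∫ ω, ‖X ω - t‖ ∂μ = ∫ ω, (1 + ε) * ‖X ω - t‖ ∂μ :=
        (integral_const_mul _ _).symm
    _ ≤ ∫ ω, (ε * ‖t‖ + ‖(1 + ε) • X ω - t‖) ∂μ :=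
        integral_mono ((hX.sub (integrable_const t)).norm.const_mul _)
          ((integrable_const _).add hdil) fun ω ↦ one_add_mul_norm_sub_le hε (X ω) t
    _ = ε * ‖t‖ + ∫ ω, ‖(1 + ε) • X ω - t‖ ∂μ := by
        rw [integral_add (integrable_const _) hdil, integral_const, probReal_univ, one_smul]

lemma integral_norm_sub_lt_integral_norm_one_add_smul_sub [IsProbabilityMeasure μ] {X : Ω → E}
    (hX : Integrable X μ) (hε : 0 < ε) {t : E} (ht : ‖t‖ < ∫ ω, ‖(1 + ε) • X ω - t‖ ∂μ) :
    ∫ ω, ‖X ω - t‖ ∂μ < ∫ ω, ‖(1 + ε) • X ω - t‖ ∂μ := by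
  have hconvex := one_add_mul_integral_norm_sub_le hX hε.le t
  have hstrict := mul_lt_mul_of_pos_left ht hε
  exact lt_of_mul_lt_mul_left (a := 1 + ε) (by linarith) (by positivity)

lemma abs_lt_integral_abs_mul_sub [IsProbabilityMeasure μ] {X : Ω → ℝ} (hX : Integrable X μ)
    (hmean : ∫ ω, X ω ∂μ = 0) {c t : ℝ} (hlt : ∃ᶠ ω in ae μ, c * X ω < t)
    (hgt : ∃ᶠ ω in ae μ, t < c * X ω) : |t| < ∫ ω, |c * X ω - t| ∂μ := by
  have hcX : Integrable (fun ω ↦ c * X ω) μ := hX.const_mul c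
  have hmean_sub : ∫ ω, (c * X ω - t) ∂μ = -t := by
    rw [integral_sub hcX (integrable_const t), integral_const_mul, hmean, integral_const,
      probReal_univ, one_smul, mul_zero, zero_sub]
  rw [← abs_neg, ← hmean_sub]
  exact abs_integral_lt_integral_abs (hcX.sub (integrable_const t))
    (hlt.mono fun _ ↦ sub_neg.2) (hgt.mono fun _ ↦ sub_pos.2)

lemma frequently_mul_lt_of_mul_essInf_lt {f : Ω → ℝ} {c t : ℝ}
    (hf : IsCoboundedUnder (· ≥ ·) (ae μ) f) (hc : 0 < c) (h : c * essInf f μ < t) :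
    ∃ᶠ ω in ae μ, c * f ω < t :=
  (frequently_lt_of_liminf_lt hf ((lt_div_iff₀' hc).2 h)).mono fun _ ↦ (lt_div_iff₀' hc).1

lemma frequently_lt_mul_of_lt_mul_essSup {f : Ω → ℝ} {c t : ℝ}
    (hf : IsCoboundedUnder (· ≤ ·) (ae μ) f) (hc : 0 < c) (h : t < c * essSup f μ) :
    ∃ᶠ ω in ae μ, t < c * f ω :=
  (frequently_lt_of_lt_limsup hf ((div_lt_iff₀' hc).2 h)).mono fun _ ↦ (div_lt_iff₀' hc).1

theorem mean_deviation_strict_comparison_general [IsProbabilityMeasure μ] {X : Ω → ℝ}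
    (hX : Integrable X μ) (hmean : ∫ ω, X ω ∂μ = 0) (hε : 0 < ε) {t : ℝ}
    (hlt : ∃ᶠ ω in ae μ, (1 + ε) * X ω < t) (hgt : ∃ᶠ ω in ae μ, t < (1 + ε) * X ω) :
    ∫ ω, |X ω - t| ∂μ < ∫ ω, |(1 + ε) * X ω - t| ∂μ :=
  integral_norm_sub_lt_integral_norm_one_add_smul_sub hX hε
    (abs_lt_integral_abs_mul_sub hX hmean hlt hgt)

end

/-- **Strict comparison of the mean deviations of `Z` and `(1+ε)Z`**
(Aubrun–Szarek–Ye, Lemma 9).  Let `Z` be a non-constant bounded real random variable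
with mean `0` and law `μ`, and let `a = ess inf Z`, `b = ess sup Z` (so `a < 0 < b`).
For `ε > 0`, setting `f(t) = E|Z − t|` and `g(t) = E|(1+ε)Z − t|`, one has
`f(t) < g(t)` for every `t ∈ ((1+ε)a, (1+ε)b)`. -/
theorem mean_deviation_strict_comparison
    (μ : Measure ℝ) (hμ : IsProbabilityMeasure μ)
    (hbdd : ∃ R : ℝ, μ (Set.Icc (-R) R)ᶜ = 0)
    (hnc : ∀ c : ℝ, μ ≠ Measure.dirac c)
    (hmean : ∫ x, x ∂μ = 0)
    (a b : ℝ) (ha : a = essInf (id : ℝ → ℝ) μ) (hb : b = essSup (id : ℝ → ℝ) μ)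
    (ε : ℝ) (hε : 0 < ε) :
    ∀ t ∈ Set.Ioo ((1 + ε) * a) ((1 + ε) * b),
      ∫ x, |x - t| ∂μ < ∫ x, |(1 + ε) * x - t| ∂μ := by
  intro t ⟨hat, htb⟩
  obtain ⟨R, hR⟩ := hbdd
  have hmem : ∀ᵐ x ∂μ, x ∈ Set.Icc (-R) R := hR
  have hpos : 0 < 1 + ε := by positivity
  subst ha hb
  exact mean_deviation_strict_comparison_general (.of_mem_Icc (-R) R aemeasurable_id hmem) hmean hε
    (frequently_mul_lt_of_mul_essInf_lt
      (isCoboundedUnder_ge_of_eventually_le _ (hmem.mono fun _ hx ↦ hx.2)) hpos hat)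
    (frequently_lt_mul_of_lt_mul_essSup
      (isCoboundedUnder_le_of_eventually_le _ (hmem.mono fun _ hx ↦ hx.1)) hpos htb)
end

section
/- Fix integers d > 1 and k ≥ 1. Let H = M_d^{sa} be the real space of self-adjoint d×d complex matrices, H_0 ⊂ H the hyperplane of trace-zero matrices, and H_1 = R·Id. Consider the action of the k-fold direct product U(d)^k of the unitary group on the real tensor power H^{⊗k}, where (U_1,…,U_k) acts by A ↦ (U_1 ⊗ ··· ⊗ U_k) A (U_1† ⊗ ··· ⊗ U_k†). Then a subspace E ⊂ H^{⊗k} is irreducible for this action if and only if E = H_{i_1} ⊗ ··· ⊗ H_{i_k} for some (i_1,…,i_k) ∈ {0,1}^k; moreover, a subspace E ⊂ H^{⊗k} is invariant if and only if it is a direct sum of subspaces of this form. -/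
open Matrix
open scoped BigOperators

noncomputable section

/-- The tensor (Kronecker) product `A₁ ⊗ ⋯ ⊗ A_k` of `k` matrices of size `d × d`,
realized as a matrix indexed by `(Fin k → Fin d)`.  Under this identification, the
real span of tensor products of Hermitian matrices is the `k`-fold real tensor power
`H^{⊗k}` of the space `H` of Hermitian `d × d` matrices. -/
def tensorK (d k : ℕ) (A : Fin k → Matrix (Fin d) (Fin d) ℂ) :
    Matrix (Fin k → Fin d) (Fin k → Fin d) ℂ :=
  Matrix.of fun p q => ∏ j, A j (p j) (q j)

/-- The action of a `k`-tuple `(U₁,…,U_k)` on `H^{⊗k}`: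
`A ↦ (U₁ ⊗ ⋯ ⊗ U_k) A (U₁ ⊗ ⋯ ⊗ U_k)†`. -/
def conjAct (d k : ℕ) (U : Fin k → Matrix (Fin d) (Fin d) ℂ)
    (A : Matrix (Fin k → Fin d) (Fin k → Fin d) ℂ) :
    Matrix (Fin k → Fin d) (Fin k → Fin d) ℂ :=
  tensorK d k U * A * (tensorK d k U)ᴴ

/-- The ambient representation space `H^{⊗k}`: the real subspace of Hermitian
matrices. -/
def hermSub (d k : ℕ) : Submodule ℝ (Matrix (Fin k → Fin d) (Fin k → Fin d) ℂ) :=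
  selfAdjoint.submodule ℝ (Matrix (Fin k → Fin d) (Fin k → Fin d) ℂ)

/-- The real span of the orbit of `x` under the action of `U(d)^k`. -/
def orbitSpan (d k : ℕ) (x : Matrix (Fin k → Fin d) (Fin k → Fin d) ℂ) :
    Submodule ℝ (Matrix (Fin k → Fin d) (Fin k → Fin d) ℂ) :=
  Submodule.span ℝ
    {y | ∃ U : Fin k → Matrix.unitaryGroup (Fin d) ℂ,
      y = conjAct d k (fun j => (U j : Matrix (Fin d) (Fin d) ℂ)) x}

/-- A (nonzero) subspace is invariant if it is preserved by the action of `U(d)^k`. -/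
def IsInvariantSub (d k : ℕ)
    (E : Submodule ℝ (Matrix (Fin k → Fin d) (Fin k → Fin d) ℂ)) : Prop :=
  E ≠ ⊥ ∧ ∀ (U : Fin k → Matrix.unitaryGroup (Fin d) ℂ), ∀ A ∈ E,
    conjAct d k (fun j => (U j : Matrix (Fin d) (Fin d) ℂ)) A ∈ E

/-- A (nonzero) subspace is irreducible if it is the span of the orbit of each of its
nonzero elements. -/
def IsIrreducibleSub (d k : ℕ)
    (E : Submodule ℝ (Matrix (Fin k → Fin d) (Fin k → Fin d) ℂ)) : Prop :=
  E ≠ ⊥ ∧ ∀ A ∈ E, A ≠ 0 → E = orbitSpan d k A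

/-- The elementary subspace `H_{i₁} ⊗ ⋯ ⊗ H_{i_k}`, where `H_1 = ℝ·Id` (for
`i_j = true`) and `H_0` is the space of trace-zero Hermitian matrices (for
`i_j = false`). -/
def elemSub (d k : ℕ) (i : Fin k → Bool) :
    Submodule ℝ (Matrix (Fin k → Fin d) (Fin k → Fin d) ℂ) :=
  Submodule.span ℝ
    {M | ∃ A : Fin k → Matrix (Fin d) (Fin d) ℂ,
      (∀ j, (A j).IsHermitian) ∧
      (∀ j, i j = true → ∃ c : ℝ, A j = (c : ℂ) • (1 : Matrix (Fin d) (Fin d) ℂ)) ∧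
      (∀ j, i j = false → (A j).trace = 0) ∧
      M = tensorK d k A}

/-!
Averaging the conjugations by diagonal sign matrices and by permutation matrices shows that the real
algebra generated by the unitary conjugations of `d × d` matrices contains `X ↦ tr(B X) C` for
`B = C = Id` and for `B = C = E_aa - E_bb`. The unitary orbit of the latter spans `H_0` by the
spectral theorem, so the algebra contains `X ↦ tr(B X) C` whenever `B` and `C` lie in the same
factor `H_0` or `H_1`. Taking tensor products, the orbit span of `X` contains `tr(B X) C` for all
pure tensors `B`, `C` in the same `H_{i_1} ⊗ ⋯ ⊗ H_{i_k}`, hence this whole subspace as soon as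
`tr(B X) ≠ 0` for one such `B`. Since the identity operator on `d × d` matrices is a real
combination of the operators `X ↦ tr(B X) C`, a Hermitian `X` lies in the sum of the elementary
subspaces contained in its own orbit span.
-/

section Multilinear

variable {R ι N : Type*} {M : ι → Type*} [CommSemiring R] [AddCommMonoid N] [Module R N]
  [∀ i, AddCommMonoid (M i)] [∀ i, Module R (M i)]

theorem multilinearMap_apply_mem_of_mem_span [Finite ι] (f : MultilinearMap R M N)
    (F : Submodule R N) (s : ∀ i, Set (M i)) (hs : ∀ m, (∀ i, m i ∈ s i) → f m ∈ F)
    {m : ∀ i, M i} (hm : ∀ i, m i ∈ Submodule.span R (s i)) : f m ∈ F := by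
  classical
  have := Fintype.ofFinite ι
  suffices partially_mem : ∀ (t : Finset ι) (m : ∀ i, M i),
      (∀ i ∈ t, m i ∈ Submodule.span R (s i)) → (∀ i ∉ t, m i ∈ s i) → f m ∈ F from
    partially_mem Finset.univ m (fun i _ => hm i) (by simp)
  intro t
  induction t using Finset.induction_on with
  | empty => exact fun m _ hm => hs m fun i => hm i (Finset.notMem_empty i)
  | insert a t ha ih =>
    intro m hspan hmem
    have span_le : Submodule.span R (s a) ≤ F.comap (f.toLinearMap m a) := by
      refine Submodule.span_le.mpr fun x hx => ih _ (fun i hi => ?_) (fun i hi => ?_)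
      · rw [Function.update_of_ne (ne_of_mem_of_not_mem hi ha)]
        exact hspan i (Finset.mem_insert_of_mem hi)
      · obtain rfl | hia := eq_or_ne i a
        · simpa using hx
        · rw [Function.update_of_ne hia]
          exact hmem i (by simp [hi, hia])
    simpa using span_le (hspan a (Finset.mem_insert_self a t))

end Multilinear

section FiniteSums

variable {n : Type*} [Fintype n] [DecidableEq n]

theorem card_nsmul_sum_perm_apply {M : Type*} [AddCommMonoid M] (f : n → M) (p : n) :
    Fintype.card n • ∑ σ : Equiv.Perm n, f (σ p) = (Fintype.card n).factorial • ∑ q, f q := by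
  have sum_apply_eq (q : n) : ∑ σ : Equiv.Perm n, f (σ q) = ∑ σ : Equiv.Perm n, f (σ p) :=
    Fintype.sum_equiv (Equiv.mulRight (Equiv.swap p q)) _ _ (by simp)
  calc Fintype.card n • ∑ σ : Equiv.Perm n, f (σ p)
      = ∑ q, ∑ σ : Equiv.Perm n, f (σ q) := by simp [sum_apply_eq]
    _ = ∑ σ : Equiv.Perm n, ∑ q, f (σ q) := Finset.sum_comm
    _ = (Fintype.card n).factorial • ∑ q, f q := by
        simp [Equiv.sum_comp, Fintype.card_perm]

theorem sum_intUnits_mul_eq_zero {p q : n} (hpq : p ≠ q) :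
    ∑ ε : n → ℤˣ, ((ε p : ℤ) * (ε q : ℤ)) = 0 := by
  let χ : (n → ℤˣ) →* ℤ :=
    (Units.coeHom ℤ).comp (Pi.evalMonoidHom (fun _ => ℤˣ) p * Pi.evalMonoidHom (fun _ => ℤˣ) q)
  have hχ : χ ≠ 1 := fun h => by
    simpa [χ, hpq.symm] using DFunLike.congr_fun h (Pi.mulSingle p (-1))
  simpa [χ] using sum_hom_units_eq_zero χ hχ

end FiniteSums

section MatrixOperators

variable {n R : Type*} [CommSemiring R]

variable (n R) in
/-- The operator that replaces the off-diagonal entries of a matrix by `0`. -/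
def diagPinching [DecidableEq n] : Module.End R (Matrix n n R) :=
  diagonalLinearMap n R R ∘ₗ diagLinearMap n R R

theorem diagPinching_apply [DecidableEq n] (X : Matrix n n R) :
    diagPinching n R X = diagonal X.diag := rfl

/-- The operator `X ↦ tr(B X) C` of rank at most one, bilinear in `B` and `C`. -/
def traceRankOne [Fintype n] :
    Matrix n n R →ₗ[R] Matrix n n R →ₗ[R] Module.End R (Matrix n n R) :=
  LinearMap.smulRightₗ ∘ₗ (LinearMap.mul R (Matrix n n R)).compr₂ (traceLinearMap n R R)

theorem traceRankOne_apply [Fintype n] (B C X : Matrix n n R) :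
    traceRankOne B C X = (B * X).trace • C := rfl

theorem sum_traceRankOne_single [Fintype n] [DecidableEq n] :
    ∑ p : n, ∑ q : n, traceRankOne (single q p (1 : R)) (single p q 1) = 1 := by
  ext1 X
  simp only [LinearMap.sum_apply, traceRankOne_apply, trace_single_mul, smul_single, smul_eq_mul,
    one_mul, mul_one, Module.End.one_apply]
  exact (matrix_eq_sum_single X).symm

theorem traceRankOne_apply_of_isHermitian {𝕜 : Type*} [RCLike 𝕜] [Fintype n]
    {B X : Matrix n n 𝕜} (hB : B.IsHermitian) (hX : X.IsHermitian)
    (C : Matrix n n 𝕜) :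
    traceRankOne B C X = RCLike.re (B * X).trace • C := by
  have htrace : star (B * X).trace = (B * X).trace := by
    rw [← trace_conjTranspose, conjTranspose_mul, hB.eq, hX.eq, trace_mul_comm]
  rw [traceRankOne_apply, RCLike.real_smul_eq_coe_smul (K := 𝕜), RCLike.conj_eq_iff_re.mp htrace]

end MatrixOperators

section DiagDiff

variable {n R : Type*} [DecidableEq n] [Ring R]

/-- The trace-zero diagonal matrix `E_aa - E_bb`, whose unitary orbit spans the trace-zero
Hermitian matrices when `a ≠ b`. -/
def diagDiff (a b : n) : Matrix n n R :=
  single a a 1 - single b b 1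

theorem diagonal_eq_sum_diagDiff [Fintype n] {w : n → R} (hw : ∑ p, w p = 0) (b : n) :
    diagonal w = ∑ p, w p • diagDiff p b := by
  have hb : ∑ p, single b b (w p) = 0 := by
    simpa [hw] using (map_sum (singleAddMonoidHom b b : R →+ Matrix n n R) w Finset.univ).symm
  simp [diagDiff, smul_sub, Finset.sum_sub_distrib, sum_single_eq_diagonal, hb]

end DiagDiff

section Conjugation

variable {n 𝕜 : Type*} [Fintype n] [DecidableEq n] [RCLike 𝕜]

/-- The representation `U ↦ (X ↦ U X U†)` of the unitary group on square matrices. -/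
def unitaryConj : unitaryGroup n 𝕜 →* Module.End 𝕜 (Matrix n n 𝕜) where
  toFun U := LinearMap.mulLeftRight 𝕜 (U, star U)
  map_one' := by ext1; simp
  map_mul' U V := by ext1; simp [mul_assoc]

theorem unitaryConj_apply (U : unitaryGroup n 𝕜) (X : Matrix n n 𝕜) :
    unitaryConj U X = (U : Matrix n n 𝕜) * X * (U : Matrix n n 𝕜)ᴴ := rfl

variable (n 𝕜) in
/-- The real algebra of operators on `n × n` matrices generated by the conjugations by unitary
matrices. The operators are `𝕜`-linear, but only their real combinations are allowed, since the
invariant subspaces under study are real. -/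
def conjAlgebra : Subalgebra ℝ (Module.End 𝕜 (Matrix n n 𝕜)) :=
  Algebra.adjoin ℝ (Set.range unitaryConj)

theorem unitaryConj_mem_conjAlgebra (U : unitaryGroup n 𝕜) : unitaryConj U ∈ conjAlgebra n 𝕜 :=
  Algebra.subset_adjoin ⟨U, rfl⟩

theorem toSubmodule_conjAlgebra :
    Subalgebra.toSubmodule (conjAlgebra n 𝕜) = Submodule.span ℝ (Set.range unitaryConj) := by
  rw [conjAlgebra, Algebra.adjoin_eq_span, ← MonoidHom.coe_mrange, Submonoid.closure_eq]

/-- The diagonal matrix of signs `ε`, as a unitary matrix. -/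
def signUnitary (ε : n → ℤˣ) : unitaryGroup n 𝕜 :=
  ⟨diagonal fun p => ((ε p : ℤ) : 𝕜), by
    rw [mem_unitaryGroup_iff, star_eq_conjTranspose, diagonal_conjTranspose,
      diagonal_mul_diagonal, ← diagonal_one]
    congr 1
    ext p
    simp [← Int.cast_mul]⟩

/-- The permutation matrix of `σ`, as a unitary matrix. -/
def permUnitary (σ : Equiv.Perm n) : unitaryGroup n 𝕜 :=
  ⟨σ.permMatrix 𝕜, by
    rw [mem_unitaryGroup_iff, star_eq_conjTranspose, conjTranspose_permMatrix,
      ← permMatrix_mul, inv_mul_cancel, permMatrix_one]⟩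

theorem unitaryConj_signUnitary_apply (ε : n → ℤˣ) (X : Matrix n n 𝕜) (p q : n) :
    unitaryConj (signUnitary ε) X p q = ((ε p : ℤ) * (ε q : ℤ) : ℤ) * X p q := by
  simp [unitaryConj_apply, signUnitary, diagonal_conjTranspose, mul_right_comm]

theorem unitaryConj_permUnitary_apply (σ : Equiv.Perm n) (X : Matrix n n 𝕜) :
    unitaryConj (permUnitary σ) X = X.submatrix σ σ := by
  ext p q
  simp [unitaryConj_apply, permUnitary, conjTranspose_permMatrix, PEquiv.toMatrix_toPEquiv_mul,
    PEquiv.mul_toMatrix_toPEquiv, Equiv.Perm.inv_def]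

theorem sum_unitaryConj_signUnitary :
    ∑ ε : n → ℤˣ, unitaryConj (signUnitary ε) =
      Fintype.card (n → ℤˣ) • diagPinching n 𝕜 := by
  ext1 X
  ext p q
  simp only [LinearMap.sum_apply, Matrix.sum_apply, unitaryConj_signUnitary_apply, ← Finset.sum_mul,
    ← Int.cast_sum, LinearMap.smul_apply, Matrix.smul_apply, diagPinching_apply]
  obtain rfl | hpq := eq_or_ne p q
  · simp [← Units.val_mul]
  · simp [sum_intUnits_mul_eq_zero hpq, hpq]

theorem diagPinching_mem_conjAlgebra : diagPinching n 𝕜 ∈ conjAlgebra n 𝕜 := by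
  have hcard : (Fintype.card (n → ℤˣ) : ℝ) ≠ 0 := by positivity
  rw [← inv_smul_smul₀ hcard (diagPinching n 𝕜), Nat.cast_smul_eq_nsmul,
    ← sum_unitaryConj_signUnitary]
  exact Subalgebra.smul_mem _ (sum_mem fun ε _ => unitaryConj_mem_conjAlgebra _) _

theorem traceRankOne_one_one_mem_conjAlgebra :
    traceRankOne (1 : Matrix n n 𝕜) 1 ∈ conjAlgebra n 𝕜 := by
  have hfact : ((Fintype.card n).factorial : ℝ) ≠ 0 := by positivity
  have twirl : (Fintype.card n).factorial • traceRankOne (1 : Matrix n n 𝕜) 1 =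
      Fintype.card n • ∑ σ : Equiv.Perm n, unitaryConj (permUnitary σ) * diagPinching n 𝕜 := by
    ext1 X
    ext p q
    simp only [LinearMap.smul_apply, traceRankOne_apply, LinearMap.sum_apply, Matrix.smul_apply,
      Matrix.sum_apply, Module.End.mul_apply, unitaryConj_permUnitary_apply, diagPinching_apply,
      submatrix_apply]
    obtain rfl | hpq := eq_or_ne p q
    · simp only [diagonal_apply_eq, card_nsmul_sum_perm_apply]
      simp [trace]
    · simp [hpq]
  rw [← inv_smul_smul₀ hfact (traceRankOne 1 1), Nat.cast_smul_eq_nsmul, twirl]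
  exact Subalgebra.smul_mem _ (nsmul_mem (sum_mem fun σ _ =>
    mul_mem (unitaryConj_mem_conjAlgebra _) diagPinching_mem_conjAlgebra) _) _

theorem traceRankOne_diagDiff_mem_conjAlgebra (a b : n) :
    traceRankOne (diagDiff a b) (diagDiff a b) ∈ conjAlgebra n 𝕜 := by
  have antisymmetrize : traceRankOne (diagDiff a b) (diagDiff a b) =
      (1 - unitaryConj (permUnitary (Equiv.swap a b))) * diagPinching n 𝕜 := by
    ext1 X
    have htrace : (diagDiff a b * X).trace = X a a - X b b := by
      simp [diagDiff, sub_mul, trace_single_mul]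
    simp only [traceRankOne_apply, htrace, Module.End.mul_apply, LinearMap.sub_apply,
      Module.End.one_apply, unitaryConj_permUnitary_apply, diagPinching_apply]
    ext p q
    simp only [diagDiff, Matrix.smul_apply, Matrix.sub_apply, single_apply, submatrix_apply,
      diagonal_apply, diag_apply, Equiv.swap_apply_def, smul_eq_mul]
    grind
  rw [antisymmetrize]
  exact mul_mem (sub_mem (one_mem _) (unitaryConj_mem_conjAlgebra _)) diagPinching_mem_conjAlgebra

theorem traceRankOne_unitaryConj (U V : unitaryGroup n 𝕜) (B C : Matrix n n 𝕜) :
    traceRankOne (unitaryConj U B) (unitaryConj V C) =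
      unitaryConj V * traceRankOne B C * unitaryConj U⁻¹ := by
  ext1 X
  have htrace : (unitaryConj U B * X).trace = (B * unitaryConj U⁻¹ X).trace := by
    simp [unitaryConj_apply, ← star_eq_conjTranspose, trace_mul_comm (U : Matrix n n 𝕜), mul_assoc]
  simp [traceRankOne_apply, htrace]

variable (n 𝕜) in
/-- The two irreducible factors of the real space of Hermitian matrices under unitary conjugation:
`H_1 = ℝ·Id` for `true` and the trace-zero Hermitian matrices `H_0` for `false`. -/
def hermFactor : Bool → Submodule ℝ (Matrix n n 𝕜)
  | true => Submodule.span ℝ {1}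
  | false => selfAdjoint.submodule ℝ (Matrix n n 𝕜) ⊓
      LinearMap.ker ((traceLinearMap n 𝕜 𝕜).restrictScalars ℝ)

theorem mem_hermFactor_true {A : Matrix n n 𝕜} :
    A ∈ hermFactor n 𝕜 true ↔ ∃ c : ℝ, c • (1 : Matrix n n 𝕜) = A :=
  Submodule.mem_span_singleton

theorem mem_hermFactor_false {A : Matrix n n 𝕜} :
    A ∈ hermFactor n 𝕜 false ↔ A.IsHermitian ∧ A.trace = 0 := Iff.rfl

/-- The real span of the orbit of `Z` under unitary conjugation. -/
def unitaryOrbitSpan (Z : Matrix n n 𝕜) : Submodule ℝ (Matrix n n 𝕜) :=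
  Submodule.span ℝ (Set.range fun U : unitaryGroup n 𝕜 => unitaryConj U Z)

theorem unitaryConj_mem_unitaryOrbitSpan {Z X : Matrix n n 𝕜} (V : unitaryGroup n 𝕜)
    (hX : X ∈ unitaryOrbitSpan Z) : unitaryConj V X ∈ unitaryOrbitSpan Z := by
  suffices unitaryOrbitSpan Z ≤
      (unitaryOrbitSpan Z).comap ((unitaryConj V).restrictScalars ℝ) from this hX
  refine Submodule.span_le.mpr ?_
  rintro _ ⟨U, rfl⟩
  exact Submodule.subset_span ⟨V * U, by simp⟩

theorem traceRankOne_mem_conjAlgebra_of_mem_unitaryOrbitSpan {Z B C : Matrix n n 𝕜}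
    (hZ : traceRankOne Z Z ∈ conjAlgebra n 𝕜) (hB : B ∈ unitaryOrbitSpan Z)
    (hC : C ∈ unitaryOrbitSpan Z) : traceRankOne B C ∈ conjAlgebra n 𝕜 := by
  refine LinearMap.BilinMap.apply_apply_mem_of_mem_span
    (Subalgebra.toSubmodule (conjAlgebra n 𝕜)) _ _
    (traceRankOne.restrictScalars₁₂ ℝ ℝ) ?_ B C hB hC
  rintro _ ⟨U, rfl⟩ _ ⟨V, rfl⟩
  change traceRankOne _ _ ∈ conjAlgebra n 𝕜
  rw [traceRankOne_unitaryConj]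
  exact mul_mem (mul_mem (unitaryConj_mem_conjAlgebra V) hZ) (unitaryConj_mem_conjAlgebra U⁻¹)

theorem hermFactor_true_le_unitaryOrbitSpan :
    hermFactor n 𝕜 true ≤ unitaryOrbitSpan 1 :=
  Submodule.span_mono (Set.singleton_subset_iff.mpr ⟨1, by simp⟩)

theorem diagDiff_mem_unitaryOrbitSpan {a b : n} (hab : a ≠ b) (p : n) :
    diagDiff p b ∈ unitaryOrbitSpan (diagDiff a b : Matrix n n 𝕜) := by
  obtain rfl | hpb := eq_or_ne p b
  · simp [diagDiff]
  refine Submodule.subset_span ⟨permUnitary (Equiv.swap p a), ?_⟩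
  simp [unitaryConj_permUnitary_apply, diagDiff, submatrix_sub,
    Equiv.swap_apply_of_ne_of_ne hpb.symm hab.symm]

theorem hermFactor_false_le_unitaryOrbitSpan {a b : n} (hab : a ≠ b) :
    hermFactor n 𝕜 false ≤ unitaryOrbitSpan (diagDiff a b) := by
  rintro C ⟨hC : C.IsHermitian, htrace : C.trace = 0⟩
  rw [hC.trace_eq_sum_eigenvalues] at htrace
  have spectral := hC.spectral_theorem
  rw [Unitary.conjStarAlgAut_apply] at spectral
  rw [spectral]
  refine unitaryConj_mem_unitaryOrbitSpan hC.eigenvectorUnitary ?_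
  rw [diagonal_eq_sum_diagDiff (w := RCLike.ofReal ∘ hC.eigenvalues) htrace b]
  refine sum_mem fun p _ => ?_
  simpa using Submodule.smul_mem _ (hC.eigenvalues p) (diagDiff_mem_unitaryOrbitSpan hab p)

theorem traceRankOne_mem_conjAlgebra [Nontrivial n] {t : Bool} {B C : Matrix n n 𝕜}
    (hB : B ∈ hermFactor n 𝕜 t) (hC : C ∈ hermFactor n 𝕜 t) :
    traceRankOne B C ∈ conjAlgebra n 𝕜 := by
  cases t with
  | true =>
    exact traceRankOne_mem_conjAlgebra_of_mem_unitaryOrbitSpan traceRankOne_one_one_mem_conjAlgebra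
      (hermFactor_true_le_unitaryOrbitSpan hB) (hermFactor_true_le_unitaryOrbitSpan hC)
  | false =>
    obtain ⟨a, b, hab⟩ := exists_pair_ne n
    exact traceRankOne_mem_conjAlgebra_of_mem_unitaryOrbitSpan
      (traceRankOne_diagDiff_mem_conjAlgebra a b)
      (hermFactor_false_le_unitaryOrbitSpan hab hB) (hermFactor_false_le_unitaryOrbitSpan hab hC)

theorem isHermitian_of_mem_hermFactor {t : Bool} {A : Matrix n n 𝕜} (hA : A ∈ hermFactor n 𝕜 t) :
    A.IsHermitian := by
  cases t with
  | true =>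
    obtain ⟨c, rfl⟩ := mem_hermFactor_true.mp hA
    simp [IsHermitian, conjTranspose_smul]
  | false => exact hA.1

theorem mem_hermFactor_iff {t : Bool} {A : Matrix n n 𝕜} :
    A ∈ hermFactor n 𝕜 t ↔ A.IsHermitian ∧ (t = true → ∃ c : ℝ, A = (c : 𝕜) • (1 : Matrix n n 𝕜)) ∧
      (t = false → A.trace = 0) := by
  refine ⟨fun hA => ⟨isHermitian_of_mem_hermFactor hA, ?_, ?_⟩, fun ⟨hherm, htrue, hfalse⟩ => ?_⟩
  · rintro rfl
    obtain ⟨c, rfl⟩ := mem_hermFactor_true.mp hA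
    exact ⟨c, RCLike.real_smul_eq_coe_smul c 1⟩
  · rintro rfl
    exact hA.2
  · cases t with
    | true =>
      obtain ⟨c, rfl⟩ := htrue rfl
      exact mem_hermFactor_true.mpr ⟨c, RCLike.real_smul_eq_coe_smul c 1⟩
    | false => exact mem_hermFactor_false.mpr ⟨hherm, hfalse rfl⟩

theorem trace_mul_eq_zero_of_mem_hermFactor {t u : Bool} (htu : t ≠ u) {A B : Matrix n n 𝕜}
    (hA : A ∈ hermFactor n 𝕜 t) (hB : B ∈ hermFactor n 𝕜 u) : (A * B).trace = 0 := by
  cases t <;> cases u <;> simp only [ne_eq, reduceCtorEq, not_true_eq_false] at htu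
  · obtain ⟨c, rfl⟩ := mem_hermFactor_true.mp hB
    simp [(mem_hermFactor_false.mp hA).2]
  · obtain ⟨c, rfl⟩ := mem_hermFactor_true.mp hA
    simp [(mem_hermFactor_false.mp hB).2]

theorem exists_mem_hermFactor_ne_zero [Nontrivial n] (t : Bool) :
    ∃ A ∈ hermFactor n 𝕜 t, A ≠ 0 := by
  cases t with
  | true => exact ⟨1, Submodule.mem_span_singleton_self 1, one_ne_zero⟩
  | false =>
    obtain ⟨a, b, hab⟩ := exists_pair_ne n
    refine ⟨diagDiff a b, mem_hermFactor_false.mpr ⟨?_, by simp [diagDiff]⟩, fun h => ?_⟩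
    · simp [diagDiff, IsHermitian, conjTranspose_single]
    · simpa [diagDiff, hab.symm] using congr_fun₂ h a a

theorem unitaryConj_mem_hermFactor {t : Bool} {A : Matrix n n 𝕜} (U : unitaryGroup n 𝕜)
    (hA : A ∈ hermFactor n 𝕜 t) : unitaryConj U A ∈ hermFactor n 𝕜 t := by
  cases t with
  | true =>
    obtain ⟨c, rfl⟩ := mem_hermFactor_true.mp hA
    exact mem_hermFactor_true.mpr ⟨c, by simp [unitaryConj_apply, ← star_eq_conjTranspose]⟩
  | false =>
    obtain ⟨hherm, htrace⟩ := mem_hermFactor_false.mp hA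
    refine mem_hermFactor_false.mpr ⟨isHermitian_mul_mul_conjTranspose _ hherm, ?_⟩
    rw [unitaryConj_apply, trace_mul_cycle, ← star_eq_conjTranspose, UnitaryGroup.star_mul_self,
      one_mul, htrace]

end Conjugation

section ResolutionOfIdentity

open Complex ComplexStarModule

theorem bilin_star_add_bilin_star {M N : Type*} [AddCommGroup M] [StarAddMonoid M] [Module ℂ M]
    [StarModule ℂ M] [AddCommGroup N] [Module ℂ N] (f : M →ₗ[ℂ] M →ₗ[ℂ] N) (a : M) :
    f (star a) a + f a (star a) = (2 : ℂ) • (f (ℜ a) (ℜ a) + f (ℑ a) (ℑ a)) := by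
  have ha : a = (ℜ a : M) + I • (ℑ a : M) := (realPart_add_I_smul_imaginaryPart a).symm
  have hstar : star a = (ℜ a : M) - I • (ℑ a : M) := by
    conv_lhs => rw [ha]
    simp [← sub_eq_add_neg]
  calc f (star a) a + f a (star a)
      = f (ℜ a - I • ℑ a) (ℜ a + I • ℑ a) + f (ℜ a + I • ℑ a) (ℜ a - I • ℑ a) := by
        rw [← hstar, ← ha]
    _ = (2 : ℂ) • (f (ℜ a) (ℜ a) + f (ℑ a) (ℑ a)) := by
        simp only [map_add, map_sub, map_smul, LinearMap.add_apply, LinearMap.sub_apply,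
          LinearMap.smul_apply, smul_add, smul_sub, smul_smul, I_mul_I, two_smul, neg_smul,
          one_smul]
        abel

variable {n : Type*} [Fintype n] [DecidableEq n]

theorem one_eq_sum_traceRankOne_realPart_imaginaryPart :
    (1 : Module.End ℂ (Matrix n n ℂ)) = ∑ p : n, ∑ q : n,
      (traceRankOne (ℜ (single p q (1 : ℂ)) : Matrix n n ℂ) (ℜ (single p q (1 : ℂ)))
        + traceRankOne (ℑ (single p q (1 : ℂ)) : Matrix n n ℂ) (ℑ (single p q (1 : ℂ)))) := by
  have star_single (p q : n) : star (single p q (1 : ℂ)) = single q p 1 := by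
    simp [star_eq_conjTranspose, conjTranspose_single]
  refine smul_right_injective _ (two_ne_zero (α := ℂ)) (?_ : (2 : ℂ) • _ = (2 : ℂ) • _)
  simp only [Finset.smul_sum, ← bilin_star_add_bilin_star, star_single]
  simp only [Finset.sum_add_distrib]
  rw [sum_traceRankOne_single, Finset.sum_comm, sum_traceRankOne_single, two_smul]

variable {𝕜 : Type*} [RCLike 𝕜]

variable (n 𝕜) in
/-- The projection `X ↦ X - (tr X / |n|) Id` onto the trace-zero matrices. -/
def tracelessProj : Module.End 𝕜 (Matrix n n 𝕜) :=
  1 - (Fintype.card n : ℝ)⁻¹ • traceRankOne 1 1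

theorem tracelessProj_apply (X : Matrix n n 𝕜) :
    tracelessProj n 𝕜 X = X - (Fintype.card n : ℝ)⁻¹ • X.trace • (1 : Matrix n n 𝕜) := by
  simp [tracelessProj, traceRankOne_apply]

theorem trace_tracelessProj [Nonempty n] (X : Matrix n n 𝕜) :
    (tracelessProj n 𝕜 X).trace = 0 := by
  have hcard : (Fintype.card n : ℝ) ≠ 0 := by positivity
  rw [tracelessProj_apply, trace_sub, trace_smul, trace_smul, trace_one, sub_eq_zero,
    eq_inv_smul_iff₀ hcard]
  simp [RCLike.real_smul_eq_coe_mul, mul_comm]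

theorem isIdempotentElem_tracelessProj [Nonempty n] : IsIdempotentElem (tracelessProj n 𝕜) := by
  ext1 X
  rw [Module.End.mul_apply, tracelessProj_apply (tracelessProj n 𝕜 X), trace_tracelessProj]
  simp

theorem tracelessProj_mem_hermFactor [Nonempty n] {X : Matrix n n 𝕜} (hX : X.IsHermitian) :
    tracelessProj n 𝕜 X ∈ hermFactor n 𝕜 false := by
  refine mem_hermFactor_false.mpr ⟨?_, trace_tracelessProj X⟩
  have htrace : star X.trace = X.trace := by rw [← trace_conjTranspose, hX.eq]
  rw [tracelessProj_apply]
  refine hX.sub ?_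
  rw [IsHermitian, conjTranspose_smul, conjTranspose_smul, htrace, conjTranspose_one, star_trivial]

theorem tracelessProj_mul_traceRankOne_mul_tracelessProj (B C : Matrix n n 𝕜) :
    tracelessProj n 𝕜 * traceRankOne B C * tracelessProj n 𝕜 =
      traceRankOne (tracelessProj n 𝕜 B) (tracelessProj n 𝕜 C) := by
  ext1 X
  have htrace : (B * tracelessProj n 𝕜 X).trace = (tracelessProj n 𝕜 B * X).trace := by
    simp [tracelessProj_apply, mul_sub, sub_mul, mul_comm]
  simp [traceRankOne_apply, htrace]

variable (n 𝕜) in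
/-- The operators `X ↦ tr(B X) C` with `B` and `C` in the same factor `H_0` or `H_1`. -/
def sameFactorRankOne : Set (Module.End 𝕜 (Matrix n n 𝕜)) :=
  {T | ∃ t, ∃ B ∈ hermFactor n 𝕜 t, ∃ C ∈ hermFactor n 𝕜 t, T = traceRankOne B C}

theorem one_mem_span_sameFactorRankOne [Nonempty n] :
    1 ∈ Submodule.span ℝ (sameFactorRankOne n ℂ) := by
  have sandwich_mem (B : selfAdjoint (Matrix n n ℂ)) :
      tracelessProj n ℂ * traceRankOne (B : Matrix n n ℂ) B * tracelessProj n ℂ ∈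
        Submodule.span ℝ (sameFactorRankOne n ℂ) := by
    rw [tracelessProj_mul_traceRankOne_mul_tracelessProj]
    exact Submodule.subset_span ⟨false, _, tracelessProj_mem_hermFactor B.2, _,
      tracelessProj_mem_hermFactor B.2, rfl⟩
  have tracelessProj_mem : tracelessProj n ℂ ∈ Submodule.span ℝ (sameFactorRankOne n ℂ) := by
    have hsandwich : tracelessProj n ℂ = tracelessProj n ℂ * 1 * tracelessProj n ℂ := by
      rw [mul_one, isIdempotentElem_tracelessProj.eq]
    rw [hsandwich, one_eq_sum_traceRankOne_realPart_imaginaryPart]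
    simp only [Finset.mul_sum, Finset.sum_mul, mul_add, add_mul]
    exact sum_mem fun p _ => sum_mem fun q _ => add_mem (sandwich_mem _) (sandwich_mem _)
  have traceRankOne_one_mem :
      traceRankOne 1 1 ∈ Submodule.span ℝ (sameFactorRankOne n ℂ) :=
    Submodule.subset_span ⟨true, 1, Submodule.mem_span_singleton_self 1, 1,
      Submodule.mem_span_singleton_self 1, rfl⟩
  rw [← sub_add_cancel 1 ((Fintype.card n : ℝ)⁻¹ • traceRankOne (1 : Matrix n n ℂ) 1)]
  exact add_mem tracelessProj_mem (Submodule.smul_mem _ _ traceRankOne_one_mem)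

end ResolutionOfIdentity

section TensorPower

open Module
open scoped TensorProduct

variable {d k : ℕ}

theorem tensorK_mul (A B : Fin k → Matrix (Fin d) (Fin d) ℂ) :
    tensorK d k A * tensorK d k B = tensorK d k (fun j => A j * B j) := by
  ext p q
  simp only [tensorK, mul_apply, of_apply, Finset.prod_univ_sum, Fintype.piFinset_univ,
    Finset.prod_mul_distrib]

theorem conjTranspose_tensorK (A : Fin k → Matrix (Fin d) (Fin d) ℂ) :
    (tensorK d k A)ᴴ = tensorK d k (fun j => (A j)ᴴ) := by
  ext p q
  simp [tensorK]

theorem trace_tensorK (A : Fin k → Matrix (Fin d) (Fin d) ℂ) :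
    (tensorK d k A).trace = ∏ j, (A j).trace := by
  simp only [trace, diag, tensorK, of_apply, Finset.prod_univ_sum, Fintype.piFinset_univ]

theorem tensorK_smul (c : Fin k → ℂ) (A : Fin k → Matrix (Fin d) (Fin d) ℂ) :
    tensorK d k (fun j => c j • A j) = (∏ j, c j) • tensorK d k A := by
  ext p q
  simp [tensorK, Finset.prod_mul_distrib]

theorem tensorK_ne_zero {A : Fin k → Matrix (Fin d) (Fin d) ℂ} (hA : ∀ j, A j ≠ 0) :
    tensorK d k A ≠ 0 := by
  have exists_entry (j : Fin k) : ∃ p q, A j p q ≠ 0 := by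
    by_contra! h
    exact hA j (Matrix.ext h)
  choose p q hpq using exists_entry
  intro h
  have hprod : ∏ j, A j (p j) (q j) = 0 := congr_fun₂ h p q
  exact Finset.prod_ne_zero_iff.mpr (fun j _ => hpq j) hprod

theorem isHermitian_tensorK {A : Fin k → Matrix (Fin d) (Fin d) ℂ}
    (hA : ∀ j, (A j).IsHermitian) : (tensorK d k A).IsHermitian := by
  rw [IsHermitian, conjTranspose_tensorK]
  exact congr_arg _ (funext hA)

variable (d k) in
/-- The identification of the abstract tensor power of the space of `d × d` matrices with the
matrices indexed by `Fin k → Fin d`; it sends pure tensors to `tensorK`. -/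
def tensorEquiv : (⨂[ℂ] _ : Fin k, Matrix (Fin d) (Fin d) ℂ) ≃ₗ[ℂ]
    Matrix (Fin k → Fin d) (Fin k → Fin d) ℂ :=
  ((Basis.piTensorProduct fun _ => Matrix.stdBasis ℂ (Fin d) (Fin d)).reindex
      (Equiv.arrowProdEquivProdArrow _ _ _)).equivFun ≪≫ₗ
    LinearEquiv.curry ℂ ℂ _ _ ≪≫ₗ Matrix.ofLinearEquiv ℂ

theorem tensorEquiv_tprod (A : Fin k → Matrix (Fin d) (Fin d) ℂ) :
    tensorEquiv d k (⨂ₜ[ℂ] j, A j) = tensorK d k A := by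
  ext p q
  simp [tensorEquiv, tensorK, Basis.piTensorProduct_repr_tprod_apply, Matrix.stdBasis]

theorem linearMap_ext_tensorK {N : Type*} [AddCommMonoid N] [Module ℂ N]
    {f g : Matrix (Fin k → Fin d) (Fin k → Fin d) ℂ →ₗ[ℂ] N}
    (h : ∀ A, f (tensorK d k A) = g (tensorK d k A)) : f = g := by
  rw [← LinearMap.cancel_right (tensorEquiv d k).surjective]
  refine PiTensorProduct.ext (MultilinearMap.ext fun A => ?_)
  simpa [tensorEquiv_tprod] using h A

variable (d k) in
/-- The operator `T₁ ⊗ ⋯ ⊗ T_k` on matrices indexed by `Fin k → Fin d`, multilinear in the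
operators `T_j` on `d × d` matrices. -/
def tensorEnd : MultilinearMap ℂ (fun _ : Fin k => End ℂ (Matrix (Fin d) (Fin d) ℂ))
    (End ℂ (Matrix (Fin k → Fin d) (Fin k → Fin d) ℂ)) :=
  (tensorEquiv d k).conj.toLinearMap.compMultilinearMap (PiTensorProduct.mapMultilinear ℂ _ _)

theorem tensorEnd_tensorK (T : Fin k → End ℂ (Matrix (Fin d) (Fin d) ℂ))
    (A : Fin k → Matrix (Fin d) (Fin d) ℂ) :
    tensorEnd d k T (tensorK d k A) = tensorK d k (fun j => T j (A j)) := by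
  simp only [tensorEnd, LinearMap.compMultilinearMap_apply, LinearEquiv.coe_coe,
    LinearEquiv.conj_apply_apply, PiTensorProduct.mapMultilinear_apply]
  rw [← tensorEquiv_tprod, LinearEquiv.symm_apply_apply, PiTensorProduct.map_tprod,
    tensorEquiv_tprod]

theorem tensorEnd_one : tensorEnd d k (fun _ => 1) = 1 :=
  linearMap_ext_tensorK fun A => by simp [tensorEnd_tensorK]

theorem tensorEnd_traceRankOne (B C : Fin k → Matrix (Fin d) (Fin d) ℂ) :
    tensorEnd d k (fun j => traceRankOne (B j) (C j)) =
      traceRankOne (tensorK d k B) (tensorK d k C) :=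
  linearMap_ext_tensorK fun A => by
    simp only [tensorEnd_tensorK, traceRankOne_apply, tensorK_smul, tensorK_mul, trace_tensorK]

theorem tensorEnd_unitaryConj_apply (U : Fin k → unitaryGroup (Fin d) ℂ)
    (X : Matrix (Fin k → Fin d) (Fin k → Fin d) ℂ) :
    tensorEnd d k (fun j => unitaryConj (U j)) X = conjAct d k (fun j => U j) X := by
  have heq : tensorEnd d k (fun j => unitaryConj (U j)) =
      LinearMap.mulLeftRight ℂ (tensorK d k fun j => U j, (tensorK d k fun j => U j)ᴴ) :=
    linearMap_ext_tensorK fun A => by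
      rw [tensorEnd_tensorK, LinearMap.mulLeftRight_apply]
      simp only [unitaryConj_apply, conjTranspose_tensorK, tensorK_mul]
  exact DFunLike.congr_fun heq X

end TensorPower

section InvariantSubspaces

open scoped ComplexOrder

variable {d k : ℕ} {i : Fin k → Bool} {X : Matrix (Fin k → Fin d) (Fin k → Fin d) ℂ}
  {E : Submodule ℝ (Matrix (Fin k → Fin d) (Fin k → Fin d) ℂ)}

theorem elemSub_eq_span (i : Fin k → Bool) :
    elemSub d k i = Submodule.span ℝ
      (tensorK d k '' {A | ∀ j, A j ∈ hermFactor (Fin d) ℂ (i j)}) := by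
  rw [elemSub]
  congr 1
  ext1 M
  simp only [Set.mem_image, Set.mem_ofPred_eq, mem_hermFactor_iff, forall_and, and_assoc,
    eq_comm (a := M)]
  rfl

theorem tensorK_mem_elemSub {A : Fin k → Matrix (Fin d) (Fin d) ℂ}
    (hA : ∀ j, A j ∈ hermFactor (Fin d) ℂ (i j)) : tensorK d k A ∈ elemSub d k i := by
  rw [elemSub_eq_span]
  exact Submodule.subset_span ⟨A, hA, rfl⟩

theorem elemSub_le_iff : elemSub d k i ≤ E ↔
    ∀ A, (∀ j, A j ∈ hermFactor (Fin d) ℂ (i j)) → tensorK d k A ∈ E := by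
  rw [elemSub_eq_span, Submodule.span_le, Set.image_subset_iff]
  rfl

theorem elemSub_le_hermSub : elemSub d k i ≤ hermSub d k :=
  elemSub_le_iff.mpr fun _ hA => isHermitian_tensorK fun j => isHermitian_of_mem_hermFactor (hA j)

theorem trace_mul_eq_zero_of_mem_elemSub {i' : Fin k → Bool} (hii' : i ≠ i')
    {Y : Matrix (Fin k → Fin d) (Fin k → Fin d) ℂ}
    (hX : X ∈ elemSub d k i) (hY : Y ∈ elemSub d k i') : (X * Y).trace = 0 := by
  obtain ⟨j, hj⟩ := Function.ne_iff.mp hii'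
  rw [elemSub_eq_span] at hX hY
  refine LinearMap.BilinMap.apply_apply_mem_of_mem_span (⊥ : Submodule ℝ ℂ) _ _
    (((LinearMap.mul ℂ _).compr₂ (traceLinearMap _ ℂ ℂ)).restrictScalars₁₂ ℝ ℝ) ?_ X Y hX hY
  rintro _ ⟨A, hA, rfl⟩ _ ⟨B, hB, rfl⟩
  change (tensorK d k A * tensorK d k B).trace = 0
  rw [tensorK_mul, trace_tensorK]
  exact Finset.prod_eq_zero (Finset.mem_univ j)
    (trace_mul_eq_zero_of_mem_hermFactor hj (hA j) (hB j))

theorem disjoint_elemSub {i' : Fin k → Bool} (hii' : i ≠ i') :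
    Disjoint (elemSub d k i) (elemSub d k i') := by
  refine Submodule.disjoint_def.mpr fun X hX hX' => ?_
  have hherm : Xᴴ = X := elemSub_le_hermSub hX
  rw [← trace_conjTranspose_mul_self_eq_zero_iff, hherm]
  exact trace_mul_eq_zero_of_mem_elemSub hii' hX hX'

theorem elemSub_ne_bot [Nontrivial (Fin d)] (i : Fin k → Bool) : elemSub d k i ≠ ⊥ := by
  choose A hA hA0 using fun j => exists_mem_hermFactor_ne_zero (n := Fin d) (𝕜 := ℂ) (i j)
  exact (Submodule.ne_bot_iff _).mpr ⟨_, tensorK_mem_elemSub hA, tensorK_ne_zero hA0⟩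

theorem isInvariantSub_iff : IsInvariantSub d k E ↔ E ≠ ⊥ ∧
    ∀ U : Fin k → unitaryGroup (Fin d) ℂ,
      E ≤ E.comap ((tensorEnd d k fun j => unitaryConj (U j)).restrictScalars ℝ) := by
  simp [IsInvariantSub, SetLike.le_def, tensorEnd_unitaryConj_apply]

theorem isInvariantSub_elemSub [Nontrivial (Fin d)] (i : Fin k → Bool) :
    IsInvariantSub d k (elemSub d k i) := by
  refine isInvariantSub_iff.mpr ⟨elemSub_ne_bot i, fun U => elemSub_le_iff.mpr fun A hA => ?_⟩
  rw [Submodule.mem_comap, LinearMap.restrictScalars_apply, tensorEnd_tensorK]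
  exact tensorK_mem_elemSub fun j => unitaryConj_mem_hermFactor (U j) (hA j)

theorem isInvariantSub_biSup {ι : Type*} {S : Set ι} (hS : S.Nonempty)
    {V : ι → Submodule ℝ (Matrix (Fin k → Fin d) (Fin k → Fin d) ℂ)}
    (hV : ∀ a ∈ S, IsInvariantSub d k (V a)) : IsInvariantSub d k (⨆ a ∈ S, V a) := by
  obtain ⟨a, ha⟩ := hS
  refine isInvariantSub_iff.mpr ⟨ne_bot_of_le_ne_bot (hV a ha).1 (le_biSup V ha), fun U => ?_⟩
  exact iSup₂_le fun b hb =>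
    ((isInvariantSub_iff.mp (hV b hb)).2 U).trans (Submodule.comap_mono (le_biSup V hb))

theorem IsInvariantSub.orbitSpan_le (hE : IsInvariantSub d k E) (hX : X ∈ E) :
    orbitSpan d k X ≤ E := by
  refine Submodule.span_le.mpr ?_
  rintro _ ⟨U, rfl⟩
  exact hE.2 U X hX

theorem tensorEnd_apply_mem_of_mem_span {s : Set (Module.End ℂ (Matrix (Fin d) (Fin d) ℂ))}
    (hs : ∀ T : Fin k → Module.End ℂ (Matrix (Fin d) (Fin d) ℂ),
      (∀ j, T j ∈ s) → tensorEnd d k T X ∈ E)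
    {T : Fin k → Module.End ℂ (Matrix (Fin d) (Fin d) ℂ)}
    (hT : ∀ j, T j ∈ Submodule.span ℝ s) : tensorEnd d k T X ∈ E :=
  multilinearMap_apply_mem_of_mem_span ((tensorEnd d k).restrictScalars ℝ)
    (E.comap ((LinearMap.applyₗ X).restrictScalars ℝ)) (fun _ => s) hs hT

theorem tensorEnd_apply_mem_orbitSpan {T : Fin k → Module.End ℂ (Matrix (Fin d) (Fin d) ℂ)}
    (hT : ∀ j, T j ∈ conjAlgebra (Fin d) ℂ) : tensorEnd d k T X ∈ orbitSpan d k X := by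
  simp only [← Subalgebra.mem_toSubmodule, toSubmodule_conjAlgebra] at hT
  refine tensorEnd_apply_mem_of_mem_span (fun T hT => ?_) hT
  choose U hU using hT
  obtain rfl : (fun j => unitaryConj (U j)) = T := funext hU
  exact Submodule.subset_span ⟨U, tensorEnd_unitaryConj_apply U X⟩

theorem elemSub_le_orbitSpan_of_trace_ne_zero [Nontrivial (Fin d)] (hX : X.IsHermitian)
    {B : Fin k → Matrix (Fin d) (Fin d) ℂ} (hB : ∀ j, B j ∈ hermFactor (Fin d) ℂ (i j))
    (htrace : RCLike.re (tensorK d k B * X).trace ≠ 0) :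
    elemSub d k i ≤ orbitSpan d k X := by
  refine elemSub_le_iff.mpr fun C hC => ?_
  have hmem : tensorEnd d k (fun j => traceRankOne (B j) (C j)) X ∈ orbitSpan d k X :=
    tensorEnd_apply_mem_orbitSpan fun j => traceRankOne_mem_conjAlgebra (hB j) (hC j)
  rw [tensorEnd_traceRankOne, traceRankOne_apply_of_isHermitian
    (isHermitian_tensorK fun j => isHermitian_of_mem_hermFactor (hB j)) hX] at hmem
  exact (Submodule.smul_mem_iff _ htrace).mp hmem

theorem mem_biSup_elemSub_le_orbitSpan [Nontrivial (Fin d)] (hX : X.IsHermitian) :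
    X ∈ ⨆ i ∈ {i | elemSub d k i ≤ orbitSpan d k X}, elemSub d k i := by
  suffices h : tensorEnd d k (fun _ => 1) X ∈
      ⨆ i ∈ {i | elemSub d k i ≤ orbitSpan d k X}, elemSub d k i by
    rwa [tensorEnd_one] at h
  refine tensorEnd_apply_mem_of_mem_span (fun T hT => ?_)
    (fun _ => one_mem_span_sameFactorRankOne)
  choose i B hB C hC hT using hT
  obtain rfl : T = fun j => traceRankOne (B j) (C j) := funext hT
  rw [tensorEnd_traceRankOne, traceRankOne_apply_of_isHermitian
    (isHermitian_tensorK fun j => isHermitian_of_mem_hermFactor (hB j)) hX]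
  obtain htrace | htrace := eq_or_ne (RCLike.re (tensorK d k B * X).trace) 0
  · simp [htrace]
  · have hi : elemSub d k i ≤ orbitSpan d k X :=
      elemSub_le_orbitSpan_of_trace_ne_zero hX hB htrace
    exact Submodule.smul_mem _ _ (le_biSup (elemSub d k) hi (tensorK_mem_elemSub hC))

theorem exists_elemSub_le_orbitSpan [Nontrivial (Fin d)] (hX : X.IsHermitian) (hX0 : X ≠ 0) :
    ∃ i, elemSub d k i ≤ orbitSpan d k X := by
  by_contra! h
  exact hX0 (by simpa [h] using mem_biSup_elemSub_le_orbitSpan hX)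

theorem IsInvariantSub.exists_elemSub_le [Nontrivial (Fin d)] (hE : IsInvariantSub d k E)
    (hherm : E ≤ hermSub d k) : ∃ i, elemSub d k i ≤ E := by
  obtain ⟨X, hX, hX0⟩ := (Submodule.ne_bot_iff E).mp hE.1
  obtain ⟨i, hi⟩ := exists_elemSub_le_orbitSpan (hherm hX) hX0
  exact ⟨i, hi.trans (hE.orbitSpan_le hX)⟩

theorem IsInvariantSub.eq_biSup_elemSub [Nontrivial (Fin d)] (hE : IsInvariantSub d k E)
    (hherm : E ≤ hermSub d k) : E = ⨆ i ∈ {i | elemSub d k i ≤ E}, elemSub d k i := by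
  refine le_antisymm (fun X hX => ?_) (iSup₂_le fun i hi => hi)
  have horbit : {i | elemSub d k i ≤ orbitSpan d k X} ⊆ {i | elemSub d k i ≤ E} :=
    fun i hi => hi.trans (hE.orbitSpan_le hX)
  have hmono := biSup_mono (f := elemSub d k) horbit
  exact hmono (mem_biSup_elemSub_le_orbitSpan (hherm hX))

theorem isIrreducibleSub_elemSub [Nontrivial (Fin d)] (i : Fin k → Bool) :
    IsIrreducibleSub d k (elemSub d k i) := by
  refine ⟨elemSub_ne_bot i, fun X hX hX0 => ?_⟩
  have horbit : orbitSpan d k X ≤ elemSub d k i := (isInvariantSub_elemSub i).orbitSpan_le hX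
  obtain ⟨i', hi'⟩ := exists_elemSub_le_orbitSpan (elemSub_le_hermSub hX) hX0
  obtain rfl : i' = i := by
    by_contra hne
    exact elemSub_ne_bot i' ((disjoint_elemSub hne).eq_bot_of_le (hi'.trans horbit))
  exact hi'.antisymm horbit

theorem IsIrreducibleSub.isInvariantSub (hE : IsIrreducibleSub d k E) : IsInvariantSub d k E := by
  refine ⟨hE.1, fun U X hX => ?_⟩
  obtain rfl | hX0 := eq_or_ne X 0
  · simp [conjAct]
  · rw [hE.2 X hX hX0]
    exact Submodule.subset_span ⟨U, rfl⟩

theorem IsIrreducibleSub.eq_of_le {F : Submodule ℝ (Matrix (Fin k → Fin d) (Fin k → Fin d) ℂ)}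
    (hE : IsIrreducibleSub d k E) (hF : IsInvariantSub d k F) (hFE : F ≤ E) : E = F := by
  obtain ⟨X, hX, hX0⟩ := (Submodule.ne_bot_iff F).mp hF.1
  refine le_antisymm ?_ hFE
  rw [hE.2 X (hFE hX) hX0]
  exact hF.orbitSpan_le hX

end InvariantSubspaces

/-- **Irreducible and invariant subspaces for the isometry group of `S`**
(Aubrun–Szarek–Ye, Lemma 10).  For the action of `U(d)^k` on `H^{⊗k}` by simultaneous
conjugation, a subspace `E ⊂ H^{⊗k}` is irreducible iff it is one of the `2^k`
elementary subspaces `H_{i₁} ⊗ ⋯ ⊗ H_{i_k}`, and invariant iff it is a (nontrivial)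
direct sum of elementary subspaces. -/
theorem irreducible_invariant_subspaces (d k : ℕ) (hd : 1 < d) (hk : 1 ≤ k)
    (E : Submodule ℝ (Matrix (Fin k → Fin d) (Fin k → Fin d) ℂ))
    (hE : E ≤ hermSub d k) :
    (IsIrreducibleSub d k E ↔ ∃ i : Fin k → Bool, E = elemSub d k i) ∧
    (IsInvariantSub d k E ↔
      ∃ S : Set (Fin k → Bool), S.Nonempty ∧ E = ⨆ i ∈ S, elemSub d k i) := by
  have : Nontrivial (Fin d) := Fin.nontrivial_iff_two_le.mpr hd
  refine ⟨⟨fun hirr => ?_, ?_⟩, ⟨fun hinv => ?_, ?_⟩⟩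
  · obtain ⟨i, hi⟩ := hirr.isInvariantSub.exists_elemSub_le hE
    exact ⟨i, hirr.eq_of_le (isInvariantSub_elemSub i) hi⟩
  · rintro ⟨i, rfl⟩
    exact isIrreducibleSub_elemSub i
  · exact ⟨_, hinv.exists_elemSub_le hE, hinv.eq_biSup_elemSub hE⟩
  · rintro ⟨S, hS, rfl⟩
    exact isInvariantSub_biSup hS fun i _ => isInvariantSub_elemSub i

end
end
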